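/- Let f : [−π,π] → ℝ be even, bounded, and continuous almost everywhere, with essential range ER(f) equal to the interval [inf_{[0,π]} f, sup_{[0,π]} f]. Then for every n and every asymptotically uniform grid {x_{i,n}}_{i=1,…,n} in [0,π], there exist a real unitary n×n matrix V_n and orderings of the eigenvalues of T_n(f) and H_n(f) such that: Y_n = V_n Δ_n V_nᵀ with Δ_n = diag_{i=1,…,n}((−1)^{i+1}); T_n(f) = V_n D_n V_nᵀ with D_n = diag_{i=1,…,n}(λ_i(T_n(f))); H_n(f) = V_n Δ_n D_n V_nᵀ; λ_i(H_n(f)) = (−1)^{i+1} λ_i(T_n(f)) for i = 1,…,n; and max_{i=1,…,n} |f(x_{i,n}) − λ_i(T_n(f))| → 0 as n → ∞. -/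

import Mathlib

/-!
Let `S` be the discrete sine transform. It is orthogonal and diagonalizes the flip,
`flipM n = S * altM n * Sᵀ` (`flipM_mul_sineM`). A symmetric Toeplitz matrix `T` commutes with the
flip, so `Sᵀ * T * S` commutes with the alternating sign matrix, that is, it is block diagonal by
parity of the indices. Diagonalizing each of the two blocks by an orthogonal matrix gives an
orthogonal `W` with `V = S * W` diagonalizing both `T` and the flip (`exists_diagonalization`).
In each block the eigenvalues `d` are ordered like the samples `s i = f (x n i)`. This is the
right ordering for the asymptotic statement.

For the convergence, `T` is close to `S * diagonal s * Sᵀ`: the squared Frobenius norm of the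
difference is `o(n)` (`frobSq_toeplitzR_sub_sine`). Indeed `f` is approximated in `L²` by a Fourier
partial sum; for a cosine polynomial the difference is a Hankel matrix supported in two corners of
fixed size; and the error on the samples is a Riemann sum, which converges because `f` is bounded
and continuous almost everywhere.

To pass from this averaged estimate to a uniform one, note that
`‖W * diagonal d * Wᵀ - diagonal s‖² = ∑ W k l ^ 2 * (d l - s k) ^ 2` with `W k l ^ 2` doubly
stochastic. If `d i` and `s i` differ by `ε`, the common ordering forces all samples of the same
parity in a window of width `2 ε / 3` next to `s i` to be transported at distance at least `ε / 3`
(`transport_card_le`). This window lies in `[inf f, sup f]`, because the eigenvalues do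
(`eigenvalue_le`, `le_eigenvalue`), so it consists of essential values of `f`. An essential value
is approached at a continuity point of `f`, near which a positive proportion of the grid points of
either parity lies (`count_values`). Hence the squared Frobenius norm would be at least a constant
times `n`, a contradiction.
-/


open MeasureTheory Matrix Filter

/-- The `k`-th Fourier coefficient of `f : ℝ → ℂ` on `[-π, π]`. -/
noncomputable def fourierCoef (f : ℝ → ℂ) (k : ℤ) : ℂ :=
  (1 / (2 * Real.pi)) * ∫ x in (-Real.pi)..Real.pi, f x * Complex.exp (-Complex.I * k * x)

/-- The `n × n` Toeplitz matrix generated by `f` (real version). -/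
noncomputable def toeplitzR (f : ℝ → ℂ) (n : ℕ) : Matrix (Fin n) (Fin n) ℝ :=
  Matrix.of fun i j => (fourierCoef f ((i : ℤ) - (j : ℤ))).re

/-- The `n × n` exchange (flip) matrix `Y_n`. -/
def flipM (n : ℕ) : Matrix (Fin n) (Fin n) ℝ :=
  Matrix.of fun i j => if (i : ℕ) + (j : ℕ) = n - 1 then 1 else 0

/-- Essential range of a real-valued function on a set. -/
def essRangeR (f : ℝ → ℝ) (s : Set ℝ) : Set ℝ :=
  {z : ℝ | ∀ ε > 0, 0 < volume {x ∈ s | |f x - z| < ε}}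

/-! ### Fourier coefficients and partial sums -/

section fourier

/-- The `k`-th cosine coefficient of `f` on `[-π, π]`; for even `f` it is the `k`-th Fourier
coefficient. -/
noncomputable def cosCoef (f : ℝ → ℝ) (k : ℤ) : ℝ :=
  1 / (2 * Real.pi) * ∫ x in (-Real.pi)..Real.pi, f x * Real.cos (k * x)

/-- The set of continuity points of `f` is a `Gδ`, hence measurable, and `f` is continuous on it. -/
lemma aestronglyMeasurable_of_ae_continuous {f : ℝ → ℝ}
    (hf : ∀ᵐ x ∂(volume.restrict (Set.Icc (-Real.pi) Real.pi)),
      ContinuousWithinAt f (Set.Icc (-Real.pi) Real.pi) x) :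
    AEStronglyMeasurable f (volume.restrict (Set.Icc (-Real.pi) Real.pi)) := by
  set C := {x | ContinuousAt f x} with hC
  have hCm : MeasurableSet C := (IsGδ.setOfPred_continuousAt f).measurableSet
  have h1 : AEStronglyMeasurable f (volume.restrict C) :=
    ContinuousOn.aestronglyMeasurable (fun x hx => ContinuousAt.continuousWithinAt hx) hCm
  rw [← restrict_Ioo_eq_restrict_Icc] at hf ⊢
  have h2 : ∀ᵐ x ∂(volume.restrict (Set.Ioo (-Real.pi) Real.pi)), x ∈ C := by
    filter_upwards [hf, ae_restrict_mem measurableSet_Ioo] with x hx hx'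
    exact hx.continuousAt (Icc_mem_nhds hx'.1 hx'.2)
  have h3 : (volume.restrict (Set.Ioo (-Real.pi) Real.pi)).restrict C
      = volume.restrict (Set.Ioo (-Real.pi) Real.pi) := Measure.restrict_eq_self_of_ae_mem h2
  rw [← h3, Measure.restrict_restrict hCm]
  exact h1.mono_measure (Measure.restrict_mono Set.inter_subset_left le_rfl)

lemma memLp_two {f : ℝ → ℝ}
    (hm : AEStronglyMeasurable f (volume.restrict (Set.Icc (-Real.pi) Real.pi)))
    {C : ℝ} (hC : ∀ x ∈ Set.Icc (-Real.pi) Real.pi, |f x| ≤ C) :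
    MemLp f 2 (volume.restrict (Set.Icc (-Real.pi) Real.pi)) :=
  MemLp.of_bound hm C ((ae_restrict_mem measurableSet_Icc).mono fun x hx => hC x hx)

lemma intervalIntegrable_of_memLp {f : ℝ → ℝ}
    (hf : MemLp f 2 (volume.restrict (Set.Icc (-Real.pi) Real.pi))) :
    IntervalIntegrable f volume (-Real.pi) Real.pi := by
  rw [intervalIntegrable_iff_integrableOn_Icc_of_le (by linarith [Real.pi_pos])]
  exact hf.integrable (by norm_num)

lemma intervalIntegrable_sq_of_memLp {f : ℝ → ℝ}
    (hf : MemLp f 2 (volume.restrict (Set.Icc (-Real.pi) Real.pi))) :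
    IntervalIntegrable (fun x => f x ^ 2) volume (-Real.pi) Real.pi := by
  rw [intervalIntegrable_iff_integrableOn_Icc_of_le (by linarith [Real.pi_pos])]
  exact hf.integrable_sq

lemma intervalIntegrable_exp {f : ℝ → ℝ}
    (hf : MemLp f 2 (volume.restrict (Set.Icc (-Real.pi) Real.pi))) (k : ℤ) :
    IntervalIntegrable (fun x : ℝ => (f x : ℂ) * Complex.exp (-Complex.I * k * x))
      volume (-Real.pi) Real.pi := by
  have h : IntervalIntegrable (fun x => (f x : ℂ)) volume (-Real.pi) Real.pi :=
    ⟨(intervalIntegrable_of_memLp hf).1.ofReal, (intervalIntegrable_of_memLp hf).2.ofReal⟩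
  exact h.mul_continuousOn (by fun_prop)

lemma exp_re (k : ℤ) (x y : ℝ) :
    ((y : ℂ) * Complex.exp (-Complex.I * k * x)).re = y * Real.cos (k * x) := by
  have : -Complex.I * k * x = ((-(k * x) : ℝ) : ℂ) * Complex.I := by push_cast; ring
  rw [this, Complex.re_ofReal_mul, Complex.exp_ofReal_mul_I_re, Real.cos_neg]

lemma exp_im (k : ℤ) (x y : ℝ) :
    ((y : ℂ) * Complex.exp (-Complex.I * k * x)).im = - (y * Real.sin (k * x)) := by
  have : -Complex.I * k * x = ((-(k * x) : ℝ) : ℂ) * Complex.I := by push_cast; ring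
  rw [this, Complex.im_ofReal_mul, Complex.exp_ofReal_mul_I_im, Real.sin_neg]
  ring

/-- For even real `f` the sine part of the Fourier integral vanishes, so the coefficients are real. -/
lemma fourierCoef_eq {f : ℝ → ℝ} (hfe : ∀ x, f (-x) = f x)
    (hf : MemLp f 2 (volume.restrict (Set.Icc (-Real.pi) Real.pi))) (k : ℤ) :
    fourierCoef (fun t => (f t : ℂ)) k = (cosCoef f k : ℂ) := by
  have hfint := intervalIntegrable_exp hf k
  have hre : (∫ x in (-Real.pi)..Real.pi, (f x : ℂ) * Complex.exp (-Complex.I * k * x)).re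
      = ∫ x in (-Real.pi)..Real.pi, f x * Real.cos (k * x) := by
    have := Complex.reCLM.intervalIntegral_comp_comm hfint
    simp only [Complex.reCLM_apply, exp_re] at this
    exact this.symm
  have him : (∫ x in (-Real.pi)..Real.pi, (f x : ℂ) * Complex.exp (-Complex.I * k * x)).im = 0 := by
    have := Complex.imCLM.intervalIntegral_comp_comm hfint
    simp only [Complex.imCLM_apply, exp_im] at this
    rw [← this]
    have h2 := intervalIntegral.integral_comp_neg (a := -Real.pi) (b := Real.pi)
      (fun x => -(f x * Real.sin (k * x)))
    simp only [hfe, neg_neg, mul_neg, Real.sin_neg, intervalIntegral.integral_neg] at h2 ⊢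
    linarith
  unfold fourierCoef cosCoef
  have : (∫ x in (-Real.pi)..Real.pi, (f x : ℂ) * Complex.exp (-Complex.I * k * x))
      = ((∫ x in (-Real.pi)..Real.pi, f x * Real.cos (k * x) : ℝ) : ℂ) :=
    Complex.ext (by rw [hre, Complex.ofReal_re]) (by rw [him, Complex.ofReal_im])
  rw [this]
  push_cast
  rfl

lemma toeplitzR_apply {f : ℝ → ℝ} (hfe : ∀ x, f (-x) = f x)
    (hf : MemLp f 2 (volume.restrict (Set.Icc (-Real.pi) Real.pi))) (n : ℕ) (i j : Fin n) :
    toeplitzR (fun t => (f t : ℂ)) n i j = cosCoef f ((i : ℤ) - j) := by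
  simp only [toeplitzR, of_apply, fourierCoef_eq hfe hf, Complex.ofReal_re]

lemma cosCoef_neg (f : ℝ → ℝ) (k : ℤ) : cosCoef f (-k) = cosCoef f k := by
  simp [cosCoef]

/-- Parseval's identity. -/
lemma hasSum_cosCoef_sq {f : ℝ → ℝ} (hfe : ∀ x, f (-x) = f x)
    (hf : MemLp f 2 (volume.restrict (Set.Icc (-Real.pi) Real.pi))) :
    HasSum (fun k : ℤ => cosCoef f k ^ 2)
      (1 / (2 * Real.pi) * ∫ x in (-Real.pi)..Real.pi, f x ^ 2) := by
  have hab : -Real.pi < Real.pi := by linarith [Real.pi_pos]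
  have hL : MemLp (fun x => (f x : ℂ)) 2 (volume.restrict (Set.Ioc (-Real.pi) Real.pi)) := by
    rw [restrict_Ioc_eq_restrict_Icc]
    exact hf.ofReal
  have h := hasSum_sq_fourierCoeffOn hab hL
  have hpp : Real.pi - -Real.pi = 2 * Real.pi := by ring
  convert h using 2 with k
  · have : fourierCoeffOn hab (fun x => (f x : ℂ)) k = fourierCoef (fun t => (f t : ℂ)) k := by
      rw [fourierCoeffOn_eq_integral, fourierCoef, hpp, Complex.real_smul]
      push_cast
      congr 1
      refine intervalIntegral.integral_congr fun x _ => ?_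
      simp only [smul_eq_mul, fourier_coe_apply]
      rw [mul_comm]
      congr 2
      have : (Real.pi : ℂ) ≠ 0 := by exact_mod_cast Real.pi_ne_zero
      push_cast
      field_simp
    rw [this, fourierCoef_eq hfe hf, Complex.norm_real, Real.norm_eq_abs, sq_abs]
  · rw [hpp, smul_eq_mul, one_div]
    simp

lemma integral_cos_int (k : ℤ) :
    1 / (2 * Real.pi) * ∫ x in (-Real.pi)..Real.pi, Real.cos (k * x) = if k = 0 then 1 else 0 := by
  split_ifs with h
  · subst h
    simp
    have := Real.pi_ne_zero
    field_simp
    ring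
  · have hk : (k : ℝ) ≠ 0 := by exact_mod_cast h
    rw [intervalIntegral.integral_comp_mul_left _ hk, integral_cos]
    simp [Real.sin_int_mul_pi]

/-- The symmetric Fourier partial sum of degree `m`, written with cosines only. It is the
Fourier partial sum of `f` when `f` is even. -/
noncomputable def partialSum (f : ℝ → ℝ) (m : ℕ) (x : ℝ) : ℝ :=
  ∑ k ∈ Finset.Icc (-(m : ℤ)) m, cosCoef f k * Real.cos (k * x)

lemma continuous_partialSum (f : ℝ → ℝ) (m : ℕ) : Continuous (partialSum f m) := by
  unfold partialSum; fun_prop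

lemma mul_partialSum_integral {g : ℝ → ℝ} (f : ℝ → ℝ)
    (hg : IntervalIntegrable g volume (-Real.pi) Real.pi) (m : ℕ) :
    1 / (2 * Real.pi) * ∫ x in (-Real.pi)..Real.pi, g x * partialSum f m x
      = ∑ k ∈ Finset.Icc (-(m : ℤ)) m, cosCoef f k * cosCoef g k := by
  unfold partialSum
  simp only [Finset.mul_sum]
  rw [intervalIntegral.integral_finsetSum, Finset.mul_sum]
  · refine Finset.sum_congr rfl fun k _ => ?_
    rw [cosCoef.eq_def g, mul_left_comm, ← intervalIntegral.integral_const_mul (cosCoef f k)]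
    simp only [mul_left_comm (g _)]
  · intro k _
    exact hg.mul_continuousOn (by fun_prop)

lemma cosCoef_partialSum (f : ℝ → ℝ) (m : ℕ) {l : ℤ} (hl : l ∈ Finset.Icc (-(m : ℤ)) m) :
    cosCoef (partialSum f m) l = cosCoef f l := by
  rw [cosCoef]
  have h1 := mul_partialSum_integral (g := fun x => Real.cos (l * x)) f
    (Continuous.intervalIntegrable (by fun_prop) _ _) m
  simp only [mul_comm (partialSum f m _)]
  rw [h1]
  have h2 : ∀ k : ℤ, cosCoef (fun x => Real.cos (l * x)) k
      = ((if l - k = 0 then 1 else 0) + (if l + k = 0 then 1 else 0)) / 2 := by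
    intro k
    rw [← integral_cos_int, ← integral_cos_int, cosCoef, ← mul_add,
      ← intervalIntegral.integral_add (Continuous.intervalIntegrable (by fun_prop) _ _)
        (Continuous.intervalIntegrable (by fun_prop) _ _), mul_div_assoc,
      ← intervalIntegral.integral_div]
    congr 2
    ext x
    push_cast
    rw [sub_mul, add_mul, Real.cos_sub, Real.cos_add]
    ring
  simp only [h2]
  rw [Finset.mem_Icc] at hl
  have e1 : ∑ k ∈ Finset.Icc (-(m : ℤ)) m, cosCoef f k * (if l - k = 0 then 1 else 0) = cosCoef f l := by
    rw [Finset.sum_eq_single l]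
    · simp
    · intro k _ hk
      rw [if_neg (by omega), mul_zero]
    · intro h; exact absurd (Finset.mem_Icc.mpr hl) h
  have e2 : ∑ k ∈ Finset.Icc (-(m : ℤ)) m, cosCoef f k * (if l + k = 0 then 1 else 0) = cosCoef f l := by
    rw [Finset.sum_eq_single (-l)]
    · simp [cosCoef_neg]
    · intro k _ hk
      rw [if_neg (by omega), mul_zero]
    · intro h; exact absurd (Finset.mem_Icc.mpr (by omega)) h
  calc _ = (∑ k ∈ Finset.Icc (-(m : ℤ)) m, cosCoef f k * (if l - k = 0 then 1 else 0)
        + ∑ k ∈ Finset.Icc (-(m : ℤ)) m, cosCoef f k * (if l + k = 0 then 1 else 0)) / 2 := by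
          rw [← Finset.sum_add_distrib, Finset.sum_div]
          exact Finset.sum_congr rfl fun k _ => by ring
    _ = _ := by rw [e1, e2]; ring

/-- The squared `L²` distance, for the normalized measure `dx / 2π`, from `f` to its partial sum
of degree `m`, in the form given by Bessel's identity (see `integral_sub_partialSum_sq`). -/
noncomputable def tailSq (f : ℝ → ℝ) (m : ℕ) : ℝ :=
  1 / (2 * Real.pi) * (∫ x in (-Real.pi)..Real.pi, f x ^ 2)
    - ∑ k ∈ Finset.Icc (-(m : ℤ)) m, cosCoef f k ^ 2

lemma integral_sub_partialSum_sq {f : ℝ → ℝ}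
    (hf : MemLp f 2 (volume.restrict (Set.Icc (-Real.pi) Real.pi))) (m : ℕ) :
    1 / (2 * Real.pi) * ∫ x in (-Real.pi)..Real.pi, (partialSum f m x - f x) ^ 2 = tailSq f m := by
  have hi := intervalIntegrable_of_memLp hf
  have hc := continuous_partialSum f m
  have h1 := mul_partialSum_integral f hi m
  have h2 := mul_partialSum_integral f (hc.intervalIntegrable (-Real.pi) Real.pi) m
  rw [Finset.sum_congr rfl fun k hk => by rw [cosCoef_partialSum f m hk]] at h2
  have hexp : ∀ x, (partialSum f m x - f x) ^ 2
      = f x ^ 2 - 2 * (f x * partialSum f m x) + partialSum f m x * partialSum f m x := fun x => by ring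
  have i1 := intervalIntegrable_sq_of_memLp hf
  have i2 : IntervalIntegrable (fun x => f x * partialSum f m x) volume (-Real.pi) Real.pi :=
    hi.mul_continuousOn hc.continuousOn
  have i3 : IntervalIntegrable (fun x => partialSum f m x * partialSum f m x) volume (-Real.pi) Real.pi :=
    (hc.mul hc).intervalIntegrable _ _
  simp only [hexp]
  rw [intervalIntegral.integral_add (i1.sub (i2.const_mul 2)) i3,
    intervalIntegral.integral_sub i1 (i2.const_mul 2), intervalIntegral.integral_const_mul, tailSq]
  simp only [← sq] at h1 h2 ⊢
  linear_combination (-2) * h1 + h2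

lemma tendsto_tailSq {f : ℝ → ℝ} (hfe : ∀ x, f (-x) = f x)
    (hf : MemLp f 2 (volume.restrict (Set.Icc (-Real.pi) Real.pi))) :
    Tendsto (tailSq f) atTop (nhds 0) := by
  have h1 := (hasSum_cosCoef_sq hfe hf).comp
    (Finset.tendsto_Icc_neg_atTop_atTop.comp tendsto_natCast_atTop_atTop : Tendsto
      (fun m : ℕ => Finset.Icc (-(m : ℤ)) (m : ℤ)) atTop atTop)
  have := h1.const_sub (1 / (2 * Real.pi) * ∫ x in (-Real.pi)..Real.pi, f x ^ 2)
  rw [sub_self] at this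
  exact this

lemma sum_tail_le {f : ℝ → ℝ} (hfe : ∀ x, f (-x) = f x)
    (hf : MemLp f 2 (volume.restrict (Set.Icc (-Real.pi) Real.pi))) (m : ℕ) (F : Finset ℤ) :
    ∑ k ∈ F, (if k ∈ Finset.Icc (-(m : ℤ)) m then 0 else cosCoef f k) ^ 2 ≤ tailSq f m := by
  classical
  have h := sum_le_hasSum (F ∪ Finset.Icc (-(m : ℤ)) m) (fun _ _ => sq_nonneg _)
    (hasSum_cosCoef_sq hfe hf)
  rw [← Finset.sdiff_union_self_eq_union, Finset.sum_union Finset.sdiff_disjoint] at h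
  have h2 : ∑ k ∈ F, (if k ∈ Finset.Icc (-(m : ℤ)) m then 0 else cosCoef f k) ^ 2
      = ∑ k ∈ F \ Finset.Icc (-(m : ℤ)) m, cosCoef f k ^ 2 := by
    rw [Finset.sdiff_eq_filter, Finset.sum_filter]
    refine Finset.sum_congr rfl fun k _ => ?_
    split_ifs <;> simp
  rw [h2, tailSq]
  linarith

/-- The Toeplitz quadratic form of `b - f ≥ 0` at `v` is the integral of `b - f` against
`|∑ vᵢ exp (i x √-1)|²`, hence nonnegative. -/
lemma toeplitz_quadratic_le {f : ℝ → ℝ}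
    (hf : MemLp f 2 (volume.restrict (Set.Icc (-Real.pi) Real.pi))) {b : ℝ}
    (hb : ∀ x ∈ Set.Icc (-Real.pi) Real.pi, f x ≤ b) {n : ℕ} (v : Fin n → ℝ) :
    ∑ i, ∑ j, v i * v j * cosCoef f ((i : ℤ) - j) ≤ b * ∑ i, v i ^ 2 := by
  have hi := intervalIntegrable_of_memLp hf
  have hib : IntervalIntegrable (fun x => b - f x) volume (-Real.pi) Real.pi :=
    (intervalIntegrable_const).sub hi
  have hc : ∀ k : ℤ, cosCoef (fun x => b - f x) k = b * (if k = 0 then 1 else 0) - cosCoef f k := by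
    intro k
    rw [← integral_cos_int, cosCoef, cosCoef, mul_left_comm, ← mul_sub,
      ← intervalIntegral.integral_const_mul b, ← intervalIntegral.integral_sub]
    · simp only [sub_mul]
    · exact Continuous.intervalIntegrable (by fun_prop) _ _
    · exact hi.mul_continuousOn (by fun_prop)
  have hkey : ∑ i, ∑ j, v i * v j * cosCoef (fun x => b - f x) ((i : ℤ) - j)
      = 1 / (2 * Real.pi) * ∫ x in (-Real.pi)..Real.pi, (b - f x) *
        ((∑ i : Fin n, v i * Real.cos (i * x)) ^ 2 + (∑ i : Fin n, v i * Real.sin (i * x)) ^ 2) := by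
    have : ∀ x, (b - f x) *
        ((∑ i : Fin n, v i * Real.cos (i * x)) ^ 2 + (∑ i : Fin n, v i * Real.sin (i * x)) ^ 2)
        = ∑ i : Fin n, ∑ j : Fin n, v i * v j * ((b - f x) * Real.cos (((i : ℤ) - j : ℤ) * x)) := by
      intro x
      rw [sq, sq, Finset.sum_mul_sum, Finset.sum_mul_sum, ← Finset.sum_add_distrib, Finset.mul_sum]
      refine Finset.sum_congr rfl fun i _ => ?_
      rw [← Finset.sum_add_distrib, Finset.mul_sum]
      refine Finset.sum_congr rfl fun j _ => ?_
      push_cast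
      rw [sub_mul (i : ℝ) (j : ℝ) x, Real.cos_sub]
      ring
    simp only [this]
    rw [intervalIntegral.integral_finsetSum, Finset.mul_sum]
    · refine Finset.sum_congr rfl fun i _ => ?_
      rw [intervalIntegral.integral_finsetSum, Finset.mul_sum]
      · refine Finset.sum_congr rfl fun j _ => ?_
        rw [intervalIntegral.integral_const_mul, cosCoef]
        ring
      · intro j _
        exact (hib.mul_continuousOn (by fun_prop)).const_mul _
    · intro i _
      have := IntervalIntegrable.sum (μ := volume) (a := -Real.pi) (b := Real.pi) Finset.univ
        (f := fun (j : Fin n) (x : ℝ) =>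
          v i * v j * ((b - f x) * Real.cos (((i : ℤ) - j : ℤ) * x))) fun j _ =>
        (hib.mul_continuousOn (by fun_prop)).const_mul _
      simpa only [Finset.sum_fn] using this
  have hnn : 0 ≤ ∑ i, ∑ j, v i * v j * cosCoef (fun x => b - f x) ((i : ℤ) - j) := by
    rw [hkey]
    refine mul_nonneg (by have := Real.pi_pos; positivity)
      (intervalIntegral.integral_nonneg (by linarith [Real.pi_pos]) fun x hx => ?_)
    exact mul_nonneg (by linarith [hb x hx]) (by positivity)
  have hsplit : ∑ i : Fin n, ∑ j : Fin n, v i * v j * cosCoef (fun x => b - f x) ((i : ℤ) - j)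
      = b * ∑ i, v i ^ 2 - ∑ i, ∑ j, v i * v j * cosCoef f ((i : ℤ) - j) := by
    rw [Finset.mul_sum, ← Finset.sum_sub_distrib]
    refine Finset.sum_congr rfl fun i _ => ?_
    simp only [hc, mul_sub, Finset.sum_sub_distrib]
    congr 1
    rw [Finset.sum_eq_single i]
    · simp; ring
    · intro j _ hj
      rw [if_neg (by intro h; apply hj; ext; omega)]; ring
    · simp
  linarith

end fourier

/-! ### The sine transform -/

section sine

lemma two_sin_mul_sum_cos (x : ℝ) (N : ℕ) :
    2 * Real.sin (x / 2) * ∑ j ∈ Finset.range N, Real.cos (j * x)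
      = Real.sin (N * x - x / 2) + Real.sin (x / 2) := by
  induction N with
  | zero => simp [Real.sin_neg]
  | succ N ih =>
    rw [Finset.sum_range_succ, mul_add, ih]
    push_cast
    have : ((N : ℝ) + 1) * x - x / 2 = N * x + x / 2 := by ring
    rw [this, Real.sin_sub, Real.sin_add]
    ring

lemma sum_cos_int (N : ℕ) (hN : 0 < N) (r : ℤ) :
    ∑ j ∈ Finset.range N, Real.cos (j * (r * Real.pi / N))
      = (if (2 * N : ℤ) ∣ r then (N : ℝ) else 0) + (1 - (-1) ^ r) / 2 := by
  have hN' : (N : ℝ) ≠ 0 := by positivity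
  split_ifs with h
  · obtain ⟨q, rfl⟩ := h
    have h1 : ∀ j ∈ Finset.range N,
        Real.cos (j * (((2 * N * q : ℤ) : ℝ) * Real.pi / N)) = 1 := by
      intro j _
      have : (j : ℝ) * (((2 * N * q : ℤ) : ℝ) * Real.pi / N) = ((j * q : ℤ) : ℝ) * (2 * Real.pi) := by
        push_cast
        field_simp
      rw [this, Real.cos_int_mul_two_pi]
    rw [Finset.sum_congr rfl h1, Even.neg_one_zpow (by rw [mul_assoc]; exact even_two_mul _)]
    simp
  · have hs : Real.sin (r * Real.pi / N / 2) ≠ 0 := by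
      intro h0
      obtain ⟨q, hq⟩ := Real.sin_eq_zero_iff.mp h0
      apply h
      refine ⟨q, ?_⟩
      have hpi := Real.pi_ne_zero
      field_simp at hq
      have : (q : ℝ) * (N * 2) = r := by linarith
      have h2 : q * (N * 2) = r := by exact_mod_cast this
      rw [← h2]; ring
    have h1 := two_sin_mul_sum_cos (r * Real.pi / N) N
    have h2 : (N : ℝ) * (r * Real.pi / N) = r * Real.pi := by field_simp
    rw [h2, Real.sin_sub, Real.sin_int_mul_pi, Real.cos_int_mul_pi] at h1
    have : 2 * Real.sin (r * Real.pi / N / 2) *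
        (∑ j ∈ Finset.range N, Real.cos (j * (r * Real.pi / N)) - (1 - (-1) ^ r) / 2) = 0 := by
      linarith
    rcases mul_eq_zero.mp this with h3 | h3
    · exact absurd h3 (by simpa using hs)
    · linarith

/-- The point `(i + 1) π / (n + 1)` of the uniform grid, with the index `i` starting at `0`. -/
noncomputable def gridPt (n : ℕ) (i : ℕ) : ℝ := ((i : ℝ) + 1) * Real.pi / (n + 1)

/-- The discrete sine transform of type I, an orthogonal symmetric matrix. -/
noncomputable def sineM (n : ℕ) : Matrix (Fin n) (Fin n) ℝ :=
  Matrix.of fun i j => √(2 / (n + 1)) * Real.sin (((i : ℕ) + 1) * gridPt n j)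

/-- The indicator of the multiples of `2 (n + 1)`, as a real number. -/
noncomputable def indDvd (n : ℕ) (r : ℤ) : ℝ := if (2 * (n + 1) : ℤ) ∣ r then 1 else 0

lemma sineM_transpose (n : ℕ) : (sineM n)ᵀ = sineM n := by
  ext i j
  simp only [sineM, transpose_apply, of_apply, gridPt]
  congr 2
  ring

/-- Conjugating the samples of `cos (k x)` by the sine transform gives the Toeplitz matrix of
`cos (k x)` (first two terms) minus a Hankel matrix (last two terms). -/
lemma sineM_conj_cos (n : ℕ) (k : ℤ) (a b : Fin n) :
    (sineM n * diagonal (fun i : Fin n => Real.cos (k * gridPt n i)) * (sineM n)ᵀ) a b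
      = (indDvd n ((a : ℤ) - b - k) + indDvd n ((a : ℤ) - b + k)
          - indDvd n ((a : ℤ) + b + 2 - k) - indDvd n ((a : ℤ) + b + 2 + k)) / 2 := by
  rw [mul_apply]
  simp only [mul_diagonal, transpose_apply, sineM, of_apply]
  set A : ℝ := (a : ℕ) + 1 with hA
  set B : ℝ := (b : ℕ) + 1 with hB
  have hsq : √(2 / ((n : ℝ) + 1)) * √(2 / ((n : ℝ) + 1)) = 2 / (n + 1) :=
    Real.mul_self_sqrt (by positivity)
  set F : ℕ → ℝ := fun j => Real.sin (A * (j * (Real.pi / (n + 1)))) *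
    Real.cos (k * (j * (Real.pi / (n + 1)))) * Real.sin (B * (j * (Real.pi / (n + 1)))) with hF
  have h1 : ∀ i : Fin n, √(2 / ((n : ℝ) + 1)) * Real.sin (A * gridPt n i) * Real.cos (k * gridPt n i) *
      (√(2 / ((n : ℝ) + 1)) * Real.sin (B * gridPt n i)) = 2 / (n + 1) * F (i + 1) := by
    intro i
    have : gridPt n i = ((i + 1 : ℕ) : ℝ) * (Real.pi / (n + 1)) := by
      rw [gridPt]; push_cast; ring
    rw [hF, this]
    linear_combination (Real.sin (A * (((i + 1 : ℕ) : ℝ) * (Real.pi / (n + 1)))) *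
      Real.cos (k * (((i + 1 : ℕ) : ℝ) * (Real.pi / (n + 1)))) *
      Real.sin (B * (((i + 1 : ℕ) : ℝ) * (Real.pi / (n + 1))))) * hsq
  rw [Finset.sum_congr rfl fun i _ => h1 i, ← Finset.mul_sum,
    Fin.sum_univ_eq_sum_range (fun i => F (i + 1))]
  have h0 : F 0 = 0 := by simp [hF]
  have h2 : ∑ i ∈ Finset.range n, F (i + 1) = ∑ i ∈ Finset.range (n + 1), F i := by
    rw [Finset.sum_range_succ', h0, add_zero]
  have h3 : ∀ j : ℕ, F j = (Real.cos (j * ((((a : ℤ) - b - k : ℤ) : ℝ) * Real.pi / (n + 1 : ℕ)))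
      + Real.cos (j * ((((a : ℤ) - b + k : ℤ) : ℝ) * Real.pi / (n + 1 : ℕ)))
      - Real.cos (j * ((((a : ℤ) + b + 2 - k : ℤ) : ℝ) * Real.pi / (n + 1 : ℕ)))
      - Real.cos (j * ((((a : ℤ) + b + 2 + k : ℤ) : ℝ) * Real.pi / (n + 1 : ℕ)))) / 4 := by
    intro j
    set y : ℝ := j * (Real.pi / (n + 1)) with hy
    have e1 : (j : ℝ) * ((((a : ℤ) - b - k : ℤ) : ℝ) * Real.pi / (n + 1 : ℕ)) = A * y - B * y - k * y := by
      rw [hy, hA, hB]; push_cast; ring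
    have e2 : (j : ℝ) * ((((a : ℤ) - b + k : ℤ) : ℝ) * Real.pi / (n + 1 : ℕ)) = A * y - B * y + k * y := by
      rw [hy, hA, hB]; push_cast; ring
    have e3 : (j : ℝ) * ((((a : ℤ) + b + 2 - k : ℤ) : ℝ) * Real.pi / (n + 1 : ℕ)) = A * y + B * y - k * y := by
      rw [hy, hA, hB]; push_cast; ring
    have e4 : (j : ℝ) * ((((a : ℤ) + b + 2 + k : ℤ) : ℝ) * Real.pi / (n + 1 : ℕ)) = A * y + B * y + k * y := by
      rw [hy, hA, hB]; push_cast; ring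
    rw [e1, e2, e3, e4]
    simp only [hF, ← hy, Real.cos_add, Real.cos_sub, Real.sin_add, Real.sin_sub]
    ring
  rw [h2, Finset.sum_congr rfl fun j _ => h3 j, ← Finset.sum_div, Finset.sum_sub_distrib,
    Finset.sum_sub_distrib, Finset.sum_add_distrib, sum_cos_int _ n.succ_pos,
    sum_cos_int _ n.succ_pos, sum_cos_int _ n.succ_pos, sum_cos_int _ n.succ_pos]
  have hpar : ∀ r q : ℤ, (-1 : ℝ) ^ (r + 2 * q) = (-1) ^ r := fun r q => by
    rw [zpow_add₀ (by norm_num), Even.neg_one_zpow (even_two_mul q), mul_one]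
  have p2 : (-1 : ℝ) ^ ((a : ℤ) - b + k) = (-1) ^ ((a : ℤ) - b - k) := by
    rw [← hpar ((a : ℤ) - b - k) k]; ring_nf
  have p3 : (-1 : ℝ) ^ ((a : ℤ) + b + 2 - k) = (-1) ^ ((a : ℤ) - b - k) := by
    rw [← hpar ((a : ℤ) - b - k) (b + 1)]; ring_nf
  have p4 : (-1 : ℝ) ^ ((a : ℤ) + b + 2 + k) = (-1) ^ ((a : ℤ) - b - k) := by
    rw [← hpar ((a : ℤ) - b - k) (b + 1 + k)]; ring_nf
  have hind : ∀ r : ℤ, (if (2 * (n + 1 : ℕ) : ℤ) ∣ r then ((n + 1 : ℕ) : ℝ) else 0)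
      = (n + 1) * indDvd n r := by
    intro r
    unfold indDvd
    push_cast
    split_ifs <;> simp
  rw [p2, p3, p4, hind, hind, hind, hind]
  field_simp
  ring

lemma indDvd_of_abs_lt {n : ℕ} {r : ℤ} (h : |r| < 2 * (n + 1)) :
    indDvd n r = if r = 0 then 1 else 0 := by
  unfold indDvd
  congr 1
  refine propext ⟨fun hd => Int.eq_zero_of_abs_lt_dvd hd h, fun h => by simp [h]⟩

lemma sineM_mul_transpose (n : ℕ) : sineM n * (sineM n)ᵀ = 1 := by
  ext a b
  have h := sineM_conj_cos n 0 a b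
  simp only [Int.cast_zero, zero_mul, Real.cos_zero, diagonal_one, Matrix.mul_one, sub_zero,
    add_zero] at h
  have ha := a.2
  have hb := b.2
  rw [h, indDvd_of_abs_lt (by rw [abs_lt]; constructor <;> omega),
    indDvd_of_abs_lt (r := (a : ℤ) + b + 2) (by rw [abs_lt]; constructor <;> omega), one_apply]
  have h2 : ¬ ((a : ℤ) + b + 2 = 0) := by omega
  rw [if_neg h2]
  have h3 : ((a : ℤ) - b = 0) ↔ a = b := by rw [Fin.ext_iff]; omega
  simp only [h3]
  split_ifs <;> norm_num

lemma flipM_mul_apply {n : ℕ} (A : Matrix (Fin n) (Fin n) ℝ) (i j : Fin n) :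
    (flipM n * A) i j = A i.rev j := by
  rw [mul_apply, Finset.sum_eq_single i.rev]
  · have : (i : ℕ) + (n - (i + 1)) = n - 1 := by omega
    simp [flipM, Fin.val_rev, this]
  · intro k _ hk
    have : ¬ ((i : ℕ) + k = n - 1) := by
      intro h; apply hk; ext; rw [Fin.val_rev]; omega
    simp [flipM, this]
  · simp

lemma mul_flipM_apply {n : ℕ} (A : Matrix (Fin n) (Fin n) ℝ) (i j : Fin n) :
    (A * flipM n) i j = A i j.rev := by
  rw [mul_apply, Finset.sum_eq_single j.rev]
  · have : n - ((j : ℕ) + 1) + j = n - 1 := by omega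
    simp [flipM, Fin.val_rev, this]
  · intro k _ hk
    have : ¬ ((k : ℕ) + j = n - 1) := by
      intro h; apply hk; ext; rw [Fin.val_rev]; omega
    simp [flipM, this]
  · simp

/-- The diagonal matrix with entries `1, -1, 1, …`. -/
def altM (n : ℕ) : Matrix (Fin n) (Fin n) ℝ := diagonal (fun i : Fin n => (-1 : ℝ) ^ (i : ℕ))

/-- The columns of the sine transform are alternately symmetric and antisymmetric under the flip. -/
lemma flipM_mul_sineM (n : ℕ) : flipM n * sineM n = sineM n * altM n := by
  ext i j
  rw [flipM_mul_apply, altM, mul_diagonal]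
  simp only [sineM, of_apply, gridPt, Fin.val_rev]
  have hi : (((n - ((i : ℕ) + 1) : ℕ) : ℝ)) = n - (i + 1) := by
    rw [Nat.cast_sub (by omega)]; push_cast; ring
  rw [hi]
  have : ((n : ℝ) - (i + 1) + 1) * (((j : ℕ) + 1) * Real.pi / (n + 1))
      = ((j + 1 : ℕ) : ℝ) * Real.pi - ((i : ℕ) + 1) * (((j : ℕ) + 1) * Real.pi / (n + 1)) := by
    push_cast
    field_simp
    ring
  rw [this, Real.sin_sub, Real.sin_nat_mul_pi, Real.cos_nat_mul_pi, pow_succ]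
  ring

end sine

/-! ### Diagonalization respecting a partition -/

section blocks

/-- The values of `e` can be permuted so as to be ordered like those of `s`. -/
lemma exists_perm_monovary {α : Type*} [Fintype α] (e s : α → ℝ) :
    ∃ σ : Equiv.Perm α, Monovary (e ∘ σ) s := by
  classical
  let φ : α ≃ Fin (Fintype.card α) := Fintype.equivFin α
  let se := Tuple.sort (e ∘ φ.symm)
  let ss := Tuple.sort (s ∘ φ.symm)
  have he := Tuple.monotone_sort (e ∘ φ.symm)
  have hs := Tuple.monotone_sort (s ∘ φ.symm)
  refine ⟨φ.trans ((ss.symm.trans se).trans φ.symm), ?_⟩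
  intro i j hij
  have h1 : ss.symm (φ i) ≤ ss.symm (φ j) := by
    by_contra h
    push Not at h
    have := hs h.le
    simp only [Function.comp_apply] at this
    have a1 : (Tuple.sort (s ∘ φ.symm)) (ss.symm (φ i)) = φ i := ss.apply_symm_apply _
    have a2 : (Tuple.sort (s ∘ φ.symm)) (ss.symm (φ j)) = φ j := ss.apply_symm_apply _
    rw [a1, a2] at this
    simp at this
    linarith
  have := he h1
  simpa [se, ss] using this

lemma exists_diag_monovary {α : Type*} [Fintype α] [DecidableEq α] (A : Matrix α α ℝ)
    (hA : Aᵀ = A) (s : α → ℝ) :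
    ∃ (U : Matrix α α ℝ) (d : α → ℝ), U * Uᵀ = 1 ∧ A = U * diagonal d * Uᵀ ∧ Monovary d s := by
  have hH : A.IsHermitian := by
    rw [Matrix.IsHermitian, conjTranspose_eq_transpose_of_trivial, hA]
  obtain ⟨σ, hσ⟩ := exists_perm_monovary hH.eigenvalues s
  let U0 : Matrix α α ℝ := hH.eigenvectorUnitary
  have hU0 : U0 * U0ᵀ = 1 := by
    have := Unitary.coe_mul_star_self hH.eigenvectorUnitary
    rwa [Unitary.coe_star, star_eq_conjTranspose, conjTranspose_eq_transpose_of_trivial] at this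
  have hA0 : A = U0 * diagonal hH.eigenvalues * U0ᵀ := by
    have := hH.spectral_theorem
    rw [Unitary.conjStarAlgAut_apply, star_eq_conjTranspose,
      conjTranspose_eq_transpose_of_trivial] at this
    exact this
  have e1 : ∀ i j : α, (U0.submatrix id σ * (U0.submatrix id σ)ᵀ) i j = (U0 * U0ᵀ) i j := by
    intro i j
    simp only [mul_apply, transpose_apply, submatrix_apply, id]
    exact Equiv.sum_comp σ (fun k => U0 i k * U0 j k)
  refine ⟨U0.submatrix id σ, hH.eigenvalues ∘ σ, ?_, ?_, hσ⟩
  · ext i j; rw [e1, hU0]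
  · conv_lhs => rw [hA0]
    ext i j
    rw [mul_apply, mul_apply]
    simp only [mul_diagonal, transpose_apply, submatrix_apply, id, Function.comp]
    exact (Equiv.sum_comp σ (fun k => U0 i k * hH.eigenvalues k * U0 j k)).symm

/-- A symmetric matrix that is block diagonal for the partition `{p, ¬ p}` has an orthogonal
diagonalization respecting the blocks, with the eigenvalues of each block ordered like `s`. -/
lemma exists_block_diag {ι : Type*} [Fintype ι] [DecidableEq ι] (p : ι → Prop) [DecidablePred p]
    (M : Matrix ι ι ℝ) (hM : Mᵀ = M) (hMp : ∀ i j, ¬ (p i ↔ p j) → M i j = 0) (s : ι → ℝ) :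
    ∃ (W : Matrix ι ι ℝ) (d : ι → ℝ), W * Wᵀ = 1 ∧ M = W * diagonal d * Wᵀ ∧
      (∀ i j, ¬ (p i ↔ p j) → W i j = 0) ∧
      (∀ i j, (p i ↔ p j) → s i < s j → d i ≤ d j) := by
  let e := Equiv.sumCompl p
  let M1 : Matrix {i // p i} {i // p i} ℝ := M.submatrix (↑) (↑)
  let M2 : Matrix {i // ¬ p i} {i // ¬ p i} ℝ := M.submatrix (↑) (↑)
  have hs : ∀ i j, M i j = M j i := fun i j => by
    conv_lhs => rw [← hM]
    rfl
  obtain ⟨U1, d1, hU1, hM1, hd1⟩ := exists_diag_monovary M1 (by ext i j; exact hs _ _) (fun i => s i)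
  obtain ⟨U2, d2, hU2, hM2, hd2⟩ := exists_diag_monovary M2 (by ext i j; exact hs _ _) (fun i => s i)
  have hMe : M.submatrix e e = fromBlocks M1 0 0 M2 := by
    ext i j
    rcases i with i | i <;> rcases j with j | j <;>
      simp [e, M1, M2]
    · exact hMp _ _ (by simp [i.2, j.2])
    · exact hMp _ _ (by simp [i.2, j.2])
  let B : Matrix ({i // p i} ⊕ {i // ¬ p i}) ({i // p i} ⊕ {i // ¬ p i}) ℝ := fromBlocks U1 0 0 U2
  have hB : B * Bᵀ = 1 := by
    simp [B, fromBlocks_transpose, fromBlocks_multiply, hU1, hU2]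
  have hBM : fromBlocks M1 0 0 M2 = B * diagonal (Sum.elim d1 d2) * Bᵀ := by
    rw [← fromBlocks_diagonal]
    simp only [B, fromBlocks_transpose, fromBlocks_multiply]
    simp [← hM1, ← hM2]
  refine ⟨B.submatrix e.symm e.symm, Sum.elim d1 d2 ∘ e.symm, ?_, ?_, ?_, ?_⟩
  · rw [transpose_submatrix, submatrix_mul_equiv, hB, submatrix_one_equiv]
  · rw [transpose_submatrix, ← submatrix_diagonal_equiv, submatrix_mul_equiv, submatrix_mul_equiv, ← hBM, ← hMe]
    simp
  · intro i j hij
    by_cases hi : p i <;> by_cases hj : p j <;> simp [hi, hj] at hij <;>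
    simp [e, B, hi, hj]
  · intro i j hij hsij
    by_cases hi : p i
    · have hj := hij.1 hi
      simp only [e, Function.comp, Equiv.sumCompl_symm_apply_of_pos hi, Equiv.sumCompl_symm_apply_of_pos hj]
      exact hd1 (i := ⟨i, hi⟩) (j := ⟨j, hj⟩) hsij
    · have hj : ¬ p j := fun h => hi (hij.2 h)
      simp only [e, Function.comp, Equiv.sumCompl_symm_apply_of_neg hi, Equiv.sumCompl_symm_apply_of_neg hj]
      exact hd2 (i := ⟨i, hi⟩) (j := ⟨j, hj⟩) hsij

end blocks

/-! ### Frobenius norm and the transport estimate -/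

/-- The squared Frobenius norm of a real square matrix. -/
def frobSq {ι : Type*} [Fintype ι] (A : Matrix ι ι ℝ) : ℝ := ∑ i, ∑ j, (A i j) ^ 2

section counting
variable {ι : Type*} [Fintype ι]

lemma frobSq_eq_trace (A : Matrix ι ι ℝ) : frobSq A = trace (A * Aᵀ) := by
  simp [frobSq, trace, mul_apply, sq]

lemma frobSq_transpose (A : Matrix ι ι ℝ) : frobSq Aᵀ = frobSq A := by
  unfold frobSq
  rw [Finset.sum_comm]
  rfl

variable [DecidableEq ι]

lemma frobSq_mul_right (A U : Matrix ι ι ℝ) (hU : U * Uᵀ = 1) : frobSq (A * U) = frobSq A := by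
  rw [frobSq_eq_trace, frobSq_eq_trace, transpose_mul, Matrix.mul_assoc, ← Matrix.mul_assoc U, hU,
    Matrix.one_mul]

lemma frobSq_mul_left (A U : Matrix ι ι ℝ) (hU : U * Uᵀ = 1) : frobSq (U * A) = frobSq A := by
  rw [← frobSq_transpose, transpose_mul, frobSq_mul_right, frobSq_transpose]
  rw [transpose_transpose]
  exact mul_eq_one_comm.mp hU

lemma frobSq_diagonal (d : ι → ℝ) : frobSq (diagonal d) = ∑ i, d i ^ 2 := by
  unfold frobSq
  refine Finset.sum_congr rfl fun i _ => ?_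
  rw [Finset.sum_eq_single i]
  · simp
  · intro j _ hj; simp [diagonal_apply_ne' _ hj]
  · simp

/-- The squared entries of an orthogonal `W` form a doubly stochastic matrix, and the Frobenius
distance is the cost of the transport plan between `d` and `s` that it defines. -/
lemma frobSq_sub_diagonal {W : Matrix ι ι ℝ} (hW : W * Wᵀ = 1) (d s : ι → ℝ) :
    frobSq (W * diagonal d * Wᵀ - diagonal s) = ∑ k, ∑ l, W k l ^ 2 * (d l - s k) ^ 2 := by
  have hW' : Wᵀ * W = 1 := mul_eq_one_comm.mp hW
  rw [← frobSq_mul_right _ W hW, Matrix.sub_mul, Matrix.mul_assoc, hW', Matrix.mul_one]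
  unfold frobSq
  refine Finset.sum_congr rfl fun i _ => Finset.sum_congr rfl fun j _ => ?_
  rw [Matrix.sub_apply, mul_diagonal, diagonal_mul]
  ring

/-- If, within the class of `i`, the `d` are ordered like the `s` and `d i` exceeds `s i` by `ε`,
then the transport plan `W k l ^ 2` must move by at least `ε / 3` a mass no smaller than the number
of `k` with `s k` in `(s i, s i + 2 ε / 3)`: rows with `s k < s i + 2 ε / 3` outnumber by at least
that much the columns with `d l < d i`. -/
lemma transport_card_le {W : Matrix ι ι ℝ} (hW : W * Wᵀ = 1) (d s : ι → ℝ)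
    (p : ι → Prop) [DecidablePred p]
    (hWp : ∀ i j, ¬ (p i ↔ p j) → W i j = 0) {i : ι} {ε : ℝ} (hε : 0 < ε)
    (hmono : ∀ j, (p i ↔ p j) → s i < s j → d i ≤ d j)
    (hi : s i + ε ≤ d i) :
    (ε / 3) ^ 2 * ((Finset.univ.filter fun k => (p i ↔ p k) ∧ s i < s k ∧ s k < s i + 2 * ε / 3).card : ℝ)
      ≤ frobSq (W * diagonal d * Wᵀ - diagonal s) := by
  rw [frobSq_sub_diagonal hW]
  have hW' : Wᵀ * W = 1 := mul_eq_one_comm.mp hW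
  have hrow : ∀ k, ∑ l, W k l ^ 2 = 1 := fun k => by
    have := congrFun (congrFun hW k) k
    simpa [mul_apply, sq] using this
  have hcol : ∀ l, ∑ k, W k l ^ 2 = 1 := fun l => by
    have := congrFun (congrFun hW' l) l
    simpa [mul_apply, sq] using this
  set S := Finset.univ.filter fun k => (p i ↔ p k) ∧ s k < s i + 2 * ε / 3 with hS
  set T := Finset.univ.filter fun l => (p i ↔ p l) ∧ d l < d i with hT
  set G := Finset.univ.filter fun k => (p i ↔ p k) ∧ s i < s k ∧ s k < s i + 2 * ε / 3 with hG
  have hcard : (G.card : ℝ) + T.card ≤ S.card := by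
    have hdis : Disjoint G T := by
      rw [Finset.disjoint_left]
      intro k hk hk'
      simp only [hG, hT, Finset.mem_filter, Finset.mem_univ, true_and] at hk hk'
      linarith [hmono k hk.1 hk.2.1, hk'.2]
    have : (G ∪ T) ⊆ S := by
      intro k hk
      simp only [hG, hT, hS, Finset.mem_union, Finset.mem_filter, Finset.mem_univ, true_and] at hk ⊢
      rcases hk with hk | hk
      · exact ⟨hk.1, hk.2.2⟩
      · refine ⟨hk.1, ?_⟩
        by_contra h
        push Not at h
        have := hmono k hk.1 (by linarith)
        linarith [hk.2]
    have h2 := Finset.card_le_card this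
    rw [Finset.card_union_of_disjoint hdis] at h2
    exact_mod_cast h2
  have h1 : ∑ k ∈ S, ∑ l, W k l ^ 2 = S.card := by simp [hrow]
  have h2 : ∑ k ∈ S, ∑ l ∈ T, W k l ^ 2 ≤ T.card := by
    rw [Finset.sum_comm]
    calc ∑ l ∈ T, ∑ k ∈ S, W k l ^ 2 ≤ ∑ l ∈ T, ∑ k, W k l ^ 2 :=
          Finset.sum_le_sum fun l _ => Finset.sum_le_sum_of_subset_of_nonneg (Finset.subset_univ _)
            fun _ _ _ => sq_nonneg _
      _ = T.card := by simp [hcol]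
  have h3 : ∀ k ∈ S, (ε / 3) ^ 2 * (∑ l, W k l ^ 2 - ∑ l ∈ T, W k l ^ 2) ≤
      ∑ l, W k l ^ 2 * (d l - s k) ^ 2 := by
    intro k hk
    simp only [hS, Finset.mem_filter, Finset.mem_univ, true_and] at hk
    rw [← Finset.sum_add_sum_compl T, add_sub_cancel_left, Finset.mul_sum]
    refine le_trans (Finset.sum_le_sum (g := fun l => W k l ^ 2 * (d l - s k) ^ 2) fun l hl => ?_)
      (Finset.sum_le_sum_of_subset_of_nonneg (Finset.subset_univ _) fun _ _ _ => by positivity)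
    by_cases hkl : p k ↔ p l
    · have hl' : d i ≤ d l := by
        by_contra h
        push Not at h
        exact (Finset.mem_compl.mp hl) (by simp [hT, h, hk.1, hkl])
      have : ε / 3 ≤ d l - s k := by linarith [hk.2]
      rw [mul_comm]
      gcongr
    · rw [hWp k l hkl]; simp
  calc (ε / 3) ^ 2 * (G.card : ℝ) ≤ (ε / 3) ^ 2 * (∑ k ∈ S, (∑ l, W k l ^ 2 - ∑ l ∈ T, W k l ^ 2)) := by
        rw [Finset.sum_sub_distrib]
        gcongr
        linarith
    _ ≤ ∑ k ∈ S, ∑ l, W k l ^ 2 * (d l - s k) ^ 2 := by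
        rw [Finset.mul_sum]; exact Finset.sum_le_sum h3
    _ ≤ _ := Finset.sum_le_sum_of_subset_of_nonneg (Finset.subset_univ _)
            fun _ _ _ => Finset.sum_nonneg fun _ _ => by positivity

/-- The mirror image of `transport_card_le`, obtained by changing the signs of `d` and `s`. -/
lemma transport_card_le' {W : Matrix ι ι ℝ} (hW : W * Wᵀ = 1) (d s : ι → ℝ)
    (p : ι → Prop) [DecidablePred p]
    (hWp : ∀ i j, ¬ (p i ↔ p j) → W i j = 0) {i : ι} {ε : ℝ} (hε : 0 < ε)
    (hmono : ∀ j, (p i ↔ p j) → s j < s i → d j ≤ d i)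
    (hi : d i + ε ≤ s i) :
    (ε / 3) ^ 2 * ((Finset.univ.filter fun k => (p i ↔ p k) ∧ s i - 2 * ε / 3 < s k ∧ s k < s i).card : ℝ)
      ≤ frobSq (W * diagonal d * Wᵀ - diagonal s) := by
  have := transport_card_le hW (-d) (-s) p hWp (i := i) hε
    (fun j hj hs => by simp at hs ⊢; exact hmono j hj hs) (by simp; linarith)
  rw [frobSq_sub_diagonal hW] at this ⊢
  have key : ∀ k l, W k l ^ 2 * ((-d) l - (-s) k) ^ 2 = W k l ^ 2 * (d l - s k) ^ 2 := fun k l => by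
    simp only [Pi.neg_apply]
    ring
  simp only [key] at this
  convert this using 4
  simp only [Pi.neg_apply]
  refine Finset.filter_congr fun k _ => and_congr_right fun _ => ?_
  constructor <;> rintro ⟨h1, h2⟩ <;> constructor <;> linarith

end counting

/-! ### Toeplitz matrices of cosine polynomials -/

section approx

lemma conj_diagonal_apply {n : ℕ} (S : Matrix (Fin n) (Fin n) ℝ) (d : Fin n → ℝ) (a b : Fin n) :
    (S * diagonal d * Sᵀ) a b = ∑ i, S a i * d i * S b i := by
  rw [Matrix.mul_apply]
  simp only [mul_diagonal, transpose_apply]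

lemma sineM_conj_partialSum (f : ℝ → ℝ) (m n : ℕ) (a b : Fin n) :
    (sineM n * diagonal (fun i : Fin n => partialSum f m (gridPt n i)) * (sineM n)ᵀ) a b
      = ∑ k ∈ Finset.Icc (-(m : ℤ)) m, cosCoef f k *
        (sineM n * diagonal (fun i : Fin n => Real.cos (k * gridPt n i)) * (sineM n)ᵀ) a b := by
  simp only [conj_diagonal_apply, partialSum, Finset.mul_sum, Finset.sum_mul]
  rw [Finset.sum_comm]
  refine Finset.sum_congr rfl fun k _ => Finset.sum_congr rfl fun i _ => ?_
  ring

lemma abs_indDvd_le (n : ℕ) (r : ℤ) : 0 ≤ indDvd n r ∧ indDvd n r ≤ 1 := by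
  unfold indDvd
  split_ifs <;> norm_num

/-- The Toeplitz matrix of the partial sum of degree `m`: the band of width `m` of the Toeplitz
matrix of `f`, for even `f`. -/
noncomputable def bandM (f : ℝ → ℝ) (m n : ℕ) : Matrix (Fin n) (Fin n) ℝ :=
  Matrix.of fun i j => if (i : ℤ) - j ∈ Finset.Icc (-(m : ℤ)) m then cosCoef f ((i : ℤ) - j) else 0

/-- The Toeplitz matrix of a cosine polynomial differs from its sine-transform counterpart by a
Hankel matrix. -/
lemma bandM_sub_apply (f : ℝ → ℝ) {m n : ℕ} (hmn : m ≤ n) (a b : Fin n) :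
    (bandM f m n - sineM n * diagonal (fun i : Fin n => partialSum f m (gridPt n i)) * (sineM n)ᵀ) a b
      = ∑ k ∈ Finset.Icc (-(m : ℤ)) m, cosCoef f k *
        ((indDvd n ((a : ℤ) + b + 2 - k) + indDvd n ((a : ℤ) + b + 2 + k)) / 2) := by
  rw [Matrix.sub_apply, sineM_conj_partialSum, sub_eq_iff_eq_add, ← Finset.sum_add_distrib]
  set r : ℤ := (a : ℤ) - b with hr
  have e1 : ∑ k ∈ Finset.Icc (-(m : ℤ)) m, cosCoef f k * (if r - k = 0 then 1 else 0)
      = bandM f m n a b := by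
    simp only [bandM, of_apply, sub_eq_zero, mul_ite, mul_one, mul_zero]
    rw [Finset.sum_ite_eq]
  have e2 : ∑ k ∈ Finset.Icc (-(m : ℤ)) m, cosCoef f k * (if r + k = 0 then 1 else 0)
      = bandM f m n a b := by
    rw [← e1]
    refine Finset.sum_nbij' (fun k => -k) (fun k => -k) ?_ ?_ ?_ ?_ ?_ <;> intro k hk <;>
      simp only [Finset.mem_Icc, neg_neg, cosCoef_neg, sub_neg_eq_add] at hk ⊢ <;> omega
  have e3 : bandM f m n a b = ∑ k ∈ Finset.Icc (-(m : ℤ)) m, cosCoef f k *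
      (((if r - k = 0 then 1 else 0) + (if r + k = 0 then 1 else 0)) / 2) := by
    have : bandM f m n a b = (bandM f m n a b + bandM f m n a b) / 2 := by ring
    rw [this]
    nth_rewrite 1 [← e1]
    rw [← e2, ← Finset.sum_add_distrib, Finset.sum_div]
    exact Finset.sum_congr rfl fun k _ => by ring
  rw [e3]
  refine Finset.sum_congr rfl fun k hk => ?_
  rw [Finset.mem_Icc] at hk
  have ha := a.2
  have hb := b.2
  rw [sineM_conj_cos, ← hr, indDvd_of_abs_lt (r := r - k) (by rw [abs_lt]; constructor <;> omega),
    indDvd_of_abs_lt (r := r + k) (by rw [abs_lt]; constructor <;> omega)]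
  ring

/-- The Hankel correction lives in two corners of size `m`, so its norm is bounded
independently of `n`. -/
lemma frobSq_bandM_sub_le (f : ℝ → ℝ) (m : ℕ) : ∃ K : ℝ, ∀ n ≥ m,
    frobSq (bandM f m n -
      sineM n * diagonal (fun i : Fin n => partialSum f m (gridPt n i)) * (sineM n)ᵀ) ≤ K := by
  set K1 : ℝ := ∑ k ∈ Finset.Icc (-(m : ℤ)) m, |cosCoef f k| with hK1
  refine ⟨K1 ^ 2 * (m ^ 2 + m ^ 2), fun n hn => ?_⟩
  set E := bandM f m n -
      sineM n * diagonal (fun i : Fin n => partialSum f m (gridPt n i)) * (sineM n)ᵀ with hE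
  -- Indicators of the first and of the last `m` indices, which delimit the two corners.
  let u : Fin n → ℝ := fun i => if (i : ℕ) < m then 1 else 0
  let w : Fin n → ℝ := fun i => if (i.rev : ℕ) < m then 1 else 0
  have hu0 : ∀ i, 0 ≤ u i := fun i => by simp only [u]; split_ifs <;> norm_num
  have hw0 : ∀ i, 0 ≤ w i := fun i => by simp only [w]; split_ifs <;> norm_num
  have hu : ∑ i, u i ≤ m := by
    simp only [u]
    rw [Fin.sum_univ_eq_sum_range (fun i => if i < m then (1 : ℝ) else 0), Finset.sum_boole]
    have : Finset.filter (fun i => i < m) (Finset.range n) ⊆ Finset.range m := by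
      intro i hi; simp at hi ⊢; exact hi.2
    have := Finset.card_le_card this
    rw [Finset.card_range] at this
    exact_mod_cast this
  have hw : ∑ i, w i ≤ m := by
    have : ∑ i, w i = ∑ i, u i := Equiv.sum_comp Fin.revPerm u
    rw [this]; exact hu
  have hent : ∀ a b, E a b ^ 2 ≤ K1 ^ 2 * (u a * u b + w a * w b) := by
    intro a b
    have ha := a.2
    have hb := b.2
    by_cases hcond : (m : ℤ) < (a : ℤ) + b + 2 ∧ (a : ℤ) + b + 2 + m < 2 * (n + 1)
    · have : E a b = 0 := by
        rw [hE, bandM_sub_apply f hn]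
        refine Finset.sum_eq_zero fun k hk => ?_
        rw [Finset.mem_Icc] at hk
        rw [indDvd_of_abs_lt (by rw [abs_lt]; constructor <;> omega),
          indDvd_of_abs_lt (r := (a : ℤ) + b + 2 + k) (by rw [abs_lt]; constructor <;> omega),
          if_neg (by omega), if_neg (by omega)]
        simp
      rw [this, zero_pow two_ne_zero]
      have := hu0 a; have := hu0 b; have := hw0 a; have := hw0 b
      positivity
    · have h1 : |E a b| ≤ K1 := by
        rw [hE, bandM_sub_apply f hn]
        refine (Finset.abs_sum_le_sum_abs _ _).trans (Finset.sum_le_sum fun k _ => ?_)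
        rw [abs_mul]
        have i1 := abs_indDvd_le n ((a : ℤ) + b + 2 - k)
        have i2 := abs_indDvd_le n ((a : ℤ) + b + 2 + k)
        refine mul_le_of_le_one_right (abs_nonneg _) (abs_le.mpr ⟨?_, ?_⟩) <;> linarith
      have h2 : 1 ≤ u a * u b + w a * w b := by
        rcases not_and_or.mp hcond with h | h
        · have : u a = 1 := if_pos (by omega)
          have : u b = 1 := if_pos (by omega)
          have := mul_nonneg (hw0 a) (hw0 b)
          simp [*]
        · have : w a = 1 := if_pos (by rw [Fin.val_rev]; omega)
          have : w b = 1 := if_pos (by rw [Fin.val_rev]; omega)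
          have := mul_nonneg (hu0 a) (hu0 b)
          simp [*]
      calc E a b ^ 2 = |E a b| ^ 2 := (sq_abs _).symm
        _ ≤ K1 ^ 2 * 1 := by rw [mul_one]; gcongr
        _ ≤ _ := by gcongr
  calc frobSq E ≤ ∑ a, ∑ b, K1 ^ 2 * (u a * u b + w a * w b) :=
        Finset.sum_le_sum fun a _ => Finset.sum_le_sum fun b _ => hent a b
    _ = K1 ^ 2 * ((∑ a, u a) ^ 2 + (∑ a, w a) ^ 2) := by
        simp only [sq (∑ a, u a), sq (∑ a, w a), Finset.sum_mul_sum, ← Finset.mul_sum, Finset.sum_add_distrib]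
    _ ≤ _ := by
        have := Finset.sum_nonneg fun i (_ : i ∈ Finset.univ) => hu0 i
        have := Finset.sum_nonneg fun i (_ : i ∈ Finset.univ) => hw0 i
        gcongr

lemma frobSq_toeplitzR_sub_bandM_le {f : ℝ → ℝ} (hfe : ∀ x, f (-x) = f x)
    (hf : MemLp f 2 (volume.restrict (Set.Icc (-Real.pi) Real.pi))) (m n : ℕ) :
    frobSq (toeplitzR (fun t => (f t : ℂ)) n - bandM f m n) ≤ n * tailSq f m := by
  unfold frobSq
  have : ∀ i : Fin n, ∑ j : Fin n, (toeplitzR (fun t => (f t : ℂ)) n - bandM f m n) i j ^ 2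
      ≤ tailSq f m := by
    intro i
    have h := sum_tail_le hfe hf m (Finset.univ.image fun j : Fin n => (i : ℤ) - j)
    rw [Finset.sum_image] at h
    · refine le_trans (le_of_eq (Finset.sum_congr rfl fun j _ => ?_)) h
      rw [Matrix.sub_apply, toeplitzR_apply hfe hf]
      simp only [bandM, of_apply]
      split_ifs <;> simp
    · intro j _ k _ h
      ext
      simp at h
      omega
  refine (Finset.sum_le_sum fun i _ => this i).trans ?_
  simp

end approx

/-! ### Riemann sums on perturbed grids -/

section riemann

/-- A Riemann sum is the integral of a step function, so convergence of the step functions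
almost everywhere and boundedness give convergence of the sums by dominated convergence. -/
lemma tendsto_riemann_sum {h : ℕ → ℕ → ℝ} {C : ℝ} (hC : ∀ n i, |h n i| ≤ C) {g : ℝ → ℝ}
    (hlim : ∀ᵐ t ∂(volume.restrict (Set.Ioc 0 Real.pi)),
      Tendsto (fun n : ℕ => h n ⌊t * (n / Real.pi)⌋₊) atTop (nhds (g t))) :
    Tendsto (fun n : ℕ => (1 / (n : ℝ)) * ∑ i ∈ Finset.range n, h n i) atTop
      (nhds (1 / Real.pi * ∫ t in (0 : ℝ)..Real.pi, g t)) := by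
  have hpi := Real.pi_pos
  have h1 : Tendsto (fun n : ℕ => ∫ t in (0 : ℝ)..Real.pi, h n ⌊t * (n / Real.pi)⌋₊) atTop
      (nhds (∫ t in (0 : ℝ)..Real.pi, g t)) := by
    refine intervalIntegral.tendsto_integral_filter_of_dominated_convergence (fun _ => C) ?_ ?_ ?_ ?_
    · refine Eventually.of_forall fun n => Measurable.aestronglyMeasurable ?_
      exact (measurable_from_top (f := h n)).comp
        (Nat.measurable_floor.comp (measurable_id.mul_const _))
    · exact Eventually.of_forall fun n => Eventually.of_forall fun t _ => hC _ _
    · exact intervalIntegrable_const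
    · rw [Set.uIoc_of_le hpi.le]
      exact (ae_restrict_iff' measurableSet_Ioc).mp hlim
  have h2 : ∀ n : ℕ, ∫ u in (0 : ℝ)..n, h n ⌊u⌋₊ = ∑ i ∈ Finset.range n, h n i := by
    intro n
    have hone : ∀ i : ℕ, Set.EqOn (fun u : ℝ => h n ⌊u⌋₊) (fun _ => h n i) (Set.Ioo (i : ℝ) (i + 1 : ℕ)) := by
      intro i u hu
      have : ⌊u⌋₊ = i := by
        rw [Nat.floor_eq_iff (le_trans (Nat.cast_nonneg i) hu.1.le)]
        refine ⟨hu.1.le, ?_⟩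
        have := hu.2
        push_cast at this
        exact this
      simp [this]
    have hae : ∀ i : ℕ, (fun _ : ℝ => h n i) =ᵐ[volume.restrict (Set.uIoc (i : ℝ) (i + 1 : ℕ))]
        (fun u : ℝ => h n ⌊u⌋₊) := by
      intro i
      rw [Set.uIoc_of_le (by push_cast; linarith), ← restrict_Ioo_eq_restrict_Ioc]
      filter_upwards [ae_restrict_mem measurableSet_Ioo] with u hu
      exact (hone i hu).symm
    have := intervalIntegral.sum_integral_adjacent_intervals (μ := volume)
      (f := fun u : ℝ => h n ⌊u⌋₊) (a := fun i : ℕ => (i : ℝ)) (n := n)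
      (fun i _ => (intervalIntegrable_const (c := h n i)).congr_ae (hae i))
    rw [Nat.cast_zero] at this
    rw [← this]
    refine Finset.sum_congr rfl fun i _ => ?_
    rw [← intervalIntegral.integral_congr_ae_restrict (hae i)]
    simp
  refine (h1.const_mul (1 / Real.pi)).congr' ?_
  filter_upwards [eventually_gt_atTop 0] with n hn
  have hn' : (n : ℝ) ≠ 0 := by positivity
  rw [intervalIntegral.integral_comp_mul_right (fun u => h n ⌊u⌋₊) (by positivity), zero_mul]
  have : Real.pi * (n / Real.pi) = n := by field_simp
  rw [this, h2, smul_eq_mul]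
  field_simp

lemma tendsto_grid (t : ℝ) (ht : 0 ≤ t) :
    Tendsto (fun n : ℕ => gridPt n ⌊t * (n / Real.pi)⌋₊) atTop (nhds t) := by
  have hpi := Real.pi_pos
  have h1 : Tendsto (fun n : ℕ => (⌊t / Real.pi * (n : ℝ)⌋₊ : ℝ) / n) atTop (nhds (t / Real.pi)) :=
    (tendsto_nat_floor_mul_div_atTop (by positivity)).comp tendsto_natCast_atTop_atTop
  have h2 : Tendsto (fun n : ℕ => 1 / ((n : ℝ) + 1)) atTop (nhds 0) :=
    tendsto_one_div_add_atTop_nhds_zero_nat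
  have h3 : Tendsto (fun n : ℕ => (n : ℝ) / (n + 1)) atTop (nhds 1) := tendsto_natCast_div_add_atTop 1
  have h4 := ((h1.mul h3).add h2).mul_const Real.pi
  have : (t / Real.pi * 1 + 0) * Real.pi = t := by field_simp; ring
  rw [this] at h4
  refine h4.congr' ?_
  filter_upwards [eventually_gt_atTop 0] with n hn
  have hn' : (n : ℝ) ≠ 0 := by positivity
  have : t * (n / Real.pi) = t / Real.pi * n := by ring
  rw [gridPt, this]
  field_simp

end riemann

/-! ### Sine-transform approximation and density of the samples -/

section samples

/-- The Toeplitz matrix is within `o(n)`, in squared Frobenius norm, of the matrix with the sine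
transform as eigenvectors and the samples of `f` on the given grid as eigenvalues. -/
lemma frobSq_toeplitzR_sub_sine {f : ℝ → ℝ} (hfe : ∀ x, f (-x) = f x)
    (hf_bdd : ∃ C : ℝ, ∀ x ∈ Set.Icc (-Real.pi) Real.pi, |f x| ≤ C)
    (hf_cae : ∀ᵐ x ∂(volume.restrict (Set.Icc (-Real.pi) Real.pi)),
      ContinuousWithinAt f (Set.Icc (-Real.pi) Real.pi) x)
    (x : (n : ℕ) → Fin n → ℝ)
    (hx_mem : ∀ n, ∀ i : Fin n, x n i ∈ Set.Icc 0 Real.pi)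
    (hx_au : ∀ ε > (0:ℝ), ∃ N : ℕ, ∀ n ≥ N, ∀ i : Fin n,
      |x n i - ((i : ℕ) + 1) * Real.pi / (n + 1)| < ε) {ε : ℝ} (hε : 0 < ε) :
    ∃ N : ℕ, ∀ n ≥ N, frobSq (toeplitzR (fun t => (f t : ℂ)) n -
      sineM n * diagonal (fun i => f (x n i)) * (sineM n)ᵀ) ≤ ε * n := by
  have hpi := Real.pi_pos
  obtain ⟨C, hC⟩ := hf_bdd
  have hf := memLp_two (aestronglyMeasurable_of_ae_continuous hf_cae) hC
  have hsub : ∀ t ∈ Set.Icc (0 : ℝ) Real.pi, t ∈ Set.Icc (-Real.pi) Real.pi :=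
    fun t ht => ⟨by linarith [ht.1], ht.2⟩
  obtain ⟨m, hm⟩ := ((tendsto_tailSq hfe hf).eventually (gt_mem_nhds (show 0 < ε / 12 by positivity))).exists
  obtain ⟨K, hK⟩ := frobSq_bandM_sub_le f m
  have hPb : ∀ t, |partialSum f m t| ≤ ∑ k ∈ Finset.Icc (-(m : ℤ)) m, |cosCoef f k| := by
    intro t
    refine (Finset.abs_sum_le_sum_abs _ _).trans (Finset.sum_le_sum fun k _ => ?_)
    rw [abs_mul]
    exact mul_le_of_le_one_right (abs_nonneg _) (Real.abs_cos_le_one _)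
  set P : ℝ := ∑ k ∈ Finset.Icc (-(m : ℤ)) m, |cosCoef f k|
  set h : ℕ → ℕ → ℝ := fun n i => if hi : i < n then
    (partialSum f m (gridPt n i) - f (x n ⟨i, hi⟩)) ^ 2 else 0 with hh
  have hbd : ∀ n i, |h n i| ≤ (P + C) ^ 2 := by
    intro n i
    simp only [hh]
    split_ifs with hi
    · rw [abs_pow]
      have h1 := hC _ (hsub _ (hx_mem n ⟨i, hi⟩))
      have h2 := (abs_sub (partialSum f m (gridPt n i)) (f (x n ⟨i, hi⟩)))
      have h3 := hPb (gridPt n i)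
      gcongr
      linarith
    · simp; positivity
  have hlim : ∀ᵐ t ∂(volume.restrict (Set.Ioc 0 Real.pi)),
      Tendsto (fun n : ℕ => h n ⌊t * (n / Real.pi)⌋₊) atTop
        (nhds ((partialSum f m t - f t) ^ 2)) := by
    rw [← restrict_Ioo_eq_restrict_Ioc]
    have h1 : ∀ᵐ t ∂(volume.restrict (Set.Ioo 0 Real.pi)),
        ContinuousWithinAt f (Set.Icc (-Real.pi) Real.pi) t :=
      ae_mono (Measure.restrict_mono (fun t ht => hsub t ⟨ht.1.le, ht.2.le⟩) le_rfl) hf_cae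
    filter_upwards [h1, ae_restrict_mem measurableSet_Ioo] with t ht htm
    have htc : ContinuousAt f t := ht.continuousAt (Icc_mem_nhds (by linarith [htm.1]) htm.2)
    have hg := tendsto_grid t htm.1.le
    have hlt : ∀ n : ℕ, 0 < n → ⌊t * (n / Real.pi)⌋₊ < n := by
      intro n hn
      have hn' : (0 : ℝ) < n := by positivity
      rw [Nat.floor_lt (by have := htm.1; positivity), ← mul_div_assoc, div_lt_iff₀ hpi, mul_comm]
      exact mul_lt_mul_of_pos_left htm.2 hn'
    have hy : Tendsto (fun n : ℕ => if hi : ⌊t * (n / Real.pi)⌋₊ < n then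
        x n ⟨⌊t * (n / Real.pi)⌋₊, hi⟩ else t) atTop (nhds t) := by
      rw [Metric.tendsto_atTop] at hg ⊢
      intro e he
      obtain ⟨N1, hN1⟩ := hg (e / 2) (by positivity)
      obtain ⟨N2, hN2⟩ := hx_au (e / 2) (by positivity)
      refine ⟨max N1 N2, fun n hn => ?_⟩
      split_ifs with hi
      · have a1 := hN1 n (le_trans (le_max_left _ _) hn)
        have a2 := hN2 n (le_trans (le_max_right _ _) hn) ⟨_, hi⟩
        rw [Real.dist_eq] at a1 ⊢
        simp only [gridPt] at a1
        rw [abs_lt] at a1 a2 ⊢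
        constructor <;> linarith [a1.1, a1.2, a2.1, a2.2]
      · simpa using he
    have h2 := (((continuous_partialSum f m).continuousAt.tendsto.comp hg).sub
      (htc.tendsto.comp hy)).pow 2
    refine h2.congr' ?_
    filter_upwards [eventually_gt_atTop 0] with n hn
    simp [hh, hlt n hn]
  have hR := tendsto_riemann_sum hbd hlim
  have hfint : 1 / Real.pi * ∫ t in (0 : ℝ)..Real.pi, (partialSum f m t - f t) ^ 2 = tailSq f m := by
    rw [← integral_sub_partialSum_sq hf]
    have hii : IntervalIntegrable (fun t => (partialSum f m t - f t) ^ 2) volume (-Real.pi) Real.pi := by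
      have : MemLp (fun t => partialSum f m t - f t) 2 (volume.restrict (Set.Icc (-Real.pi) Real.pi)) := by
        refine MemLp.sub ?_ hf
        exact memLp_two (continuous_partialSum f m).aestronglyMeasurable fun t _ => hPb t
      exact intervalIntegrable_sq_of_memLp this
    have hs0 : (0 : ℝ) ∈ Set.uIcc (-Real.pi) Real.pi := by
      rw [Set.uIcc_of_le (by linarith)]; constructor <;> linarith
    rw [← intervalIntegral.integral_add_adjacent_intervals
      (hii.mono_set (Set.uIcc_subset_uIcc_left hs0)) (hii.mono_set (Set.uIcc_subset_uIcc_right hs0))]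
    have hev := intervalIntegral.integral_comp_neg (a := 0) (b := Real.pi)
      (fun t => (partialSum f m t - f t) ^ 2)
    have hpe : ∀ t, partialSum f m (-t) = partialSum f m t := fun t => by
      simp [partialSum]
    simp only [hpe, hfe, neg_zero] at hev
    rw [← hev]
    field_simp
    ring
  rw [hfint] at hR
  obtain ⟨N1, hN1⟩ := eventually_atTop.mp (hR.eventually (gt_mem_nhds hm))
  obtain ⟨N2, hN2⟩ := exists_nat_gt (K / (ε / 12))
  refine ⟨max (max N1 N2) (max m 1), fun n hn => ?_⟩
  have hn1 : N1 ≤ n := le_trans (le_trans (le_max_left _ _) (le_max_left _ _)) hn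
  have hn2 : N2 ≤ n := le_trans (le_trans (le_max_right _ _) (le_max_left _ _)) hn
  have hn3 : m ≤ n := le_trans (le_trans (le_max_left _ _) (le_max_right _ _)) hn
  have hn4 : 1 ≤ n := le_trans (le_trans (le_max_right _ _) (le_max_right _ _)) hn
  have hnpos : (0 : ℝ) < n := by exact_mod_cast hn4
  set T := toeplitzR (fun t => (f t : ℂ)) n
  set S := sineM n
  have b1 : frobSq (T - bandM f m n) ≤ n * (ε / 12) :=
    (frobSq_toeplitzR_sub_bandM_le hfe hf m n).trans (by gcongr)
  have b2 : frobSq (bandM f m n - S * diagonal (fun i : Fin n => partialSum f m (gridPt n i)) * Sᵀ)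
      ≤ n * (ε / 12) := by
    refine (hK n hn3).trans ?_
    rw [div_lt_iff₀ (by positivity)] at hN2
    have : (N2 : ℝ) ≤ n := by exact_mod_cast hn2
    nlinarith
  have b3 : frobSq (S * diagonal (fun i : Fin n => partialSum f m (gridPt n i)) * Sᵀ
      - S * diagonal (fun i => f (x n i)) * Sᵀ) ≤ n * (ε / 12) := by
    rw [← Matrix.sub_mul, ← Matrix.mul_sub, frobSq_mul_right, frobSq_mul_left _ _ (sineM_mul_transpose n),
      diagonal_sub, frobSq_diagonal]
    · have h5 := (hN1 n hn1).le
      have h6 : ∑ i : Fin n, (partialSum f m (gridPt n i) - f (x n i)) ^ 2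
          = ∑ i ∈ Finset.range n, h n i := by
        rw [← Fin.sum_univ_eq_sum_range]
        refine Finset.sum_congr rfl fun i _ => ?_
        simp [hh]
      rw [h6]
      rw [one_div, inv_mul_le_iff₀ hnpos] at h5
      exact h5
    · rw [transpose_transpose]
      exact mul_eq_one_comm.mp (sineM_mul_transpose n)
  -- The triangle inequality in the form `‖A + B + C‖² ≤ 3 (‖A‖² + ‖B‖² + ‖C‖²)`.
  have h3 : ∀ A B C : Matrix (Fin n) (Fin n) ℝ,
      frobSq (A + B + C) ≤ 3 * (frobSq A + frobSq B + frobSq C) := by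
    intro A B C
    simp only [frobSq, Finset.mul_sum, ← Finset.sum_add_distrib]
    refine Finset.sum_le_sum fun i _ => Finset.sum_le_sum fun j _ => ?_
    simp only [Matrix.add_apply]
    nlinarith [sq_nonneg (A i j - B i j), sq_nonneg (A i j - C i j), sq_nonneg (B i j - C i j)]
  have h4 := h3 (T - bandM f m n)
    (bandM f m n - S * diagonal (fun i : Fin n => partialSum f m (gridPt n i)) * Sᵀ)
    (S * diagonal (fun i : Fin n => partialSum f m (gridPt n i)) * Sᵀ
      - S * diagonal (fun i => f (x n i)) * Sᵀ)
  rw [sub_add_sub_cancel, sub_add_sub_cancel] at h4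
  nlinarith

lemma exists_continuity_point {f : ℝ → ℝ} (hfe : ∀ x, f (-x) = f x)
    (hf_cae : ∀ᵐ x ∂(volume.restrict (Set.Icc (-Real.pi) Real.pi)),
      ContinuousWithinAt f (Set.Icc (-Real.pi) Real.pi) x) {y : ℝ}
    (hy : y ∈ essRangeR f (Set.Icc (-Real.pi) Real.pi)) {ε : ℝ} (hε : 0 < ε) :
    ∃ z ∈ Set.Ioo 0 Real.pi, ContinuousAt f z ∧ |f z - y| < ε := by
  have h0 := hy ε hε
  have h1 : ∀ᵐ t ∂(volume : Measure ℝ), t ∈ Set.Icc (-Real.pi) Real.pi →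
      ContinuousWithinAt f (Set.Icc (-Real.pi) Real.pi) t :=
    (ae_restrict_iff' measurableSet_Icc).mp hf_cae
  have h2 : ∀ᵐ t ∂(volume : Measure ℝ), t ∉ ({0, Real.pi, -Real.pi} : Set ℝ) :=
    measure_eq_zero_iff_ae_notMem.mp (Set.Finite.measure_zero (Set.toFinite _) _)
  have h3 : ∃ t ∈ {x ∈ Set.Icc (-Real.pi) Real.pi | |f x - y| < ε},
      ContinuousWithinAt f (Set.Icc (-Real.pi) Real.pi) t ∧ t ∉ ({0, Real.pi, -Real.pi} : Set ℝ) := by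
    by_contra hcon
    push Not at hcon
    refine h0.ne' (measure_eq_zero_iff_ae_notMem.mpr ?_)
    filter_upwards [h1, h2] with t ht1 ht2 hts
    exact ht2 (hcon t hts (ht1 hts.1))
  obtain ⟨t, ⟨htm, hty⟩, htc, ht0⟩ := h3
  simp only [Set.mem_insert_iff, Set.mem_singleton_iff, not_or] at ht0
  have hlt1 : -Real.pi < t := lt_of_le_of_ne htm.1 (Ne.symm ht0.2.2)
  have hlt2 : t < Real.pi := lt_of_le_of_ne htm.2 ht0.2.1
  have hta : ContinuousAt f t := htc.continuousAt (Icc_mem_nhds hlt1 hlt2)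
  rcases lt_or_gt_of_ne ht0.1 with h | h
  · refine ⟨-t, ⟨by linarith, by linarith⟩, ?_, by rwa [hfe]⟩
    have h5 : ContinuousAt (fun u => f (-u)) (-t) :=
      ContinuousAt.comp (by rwa [neg_neg]) continuous_neg.continuousAt
    simpa only [hfe] using h5
  · exact ⟨t, ⟨h, hlt2⟩, hta, hty⟩

/-- A positive proportion of the grid points of each parity lies near any interior point. -/
lemma count_near (x : (n : ℕ) → Fin n → ℝ)
    (hx_au : ∀ ε > (0:ℝ), ∃ N : ℕ, ∀ n ≥ N, ∀ i : Fin n,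
      |x n i - ((i : ℕ) + 1) * Real.pi / (n + 1)| < ε) {z η : ℝ} (hz : z ∈ Set.Ioo 0 Real.pi)
    (hη : 0 < η) :
    ∃ δ > (0 : ℝ), ∃ N : ℕ, ∀ n ≥ N, ∀ q : ℕ, δ * n ≤
      ((Finset.univ.filter fun k : Fin n => (Even q ↔ Even (k : ℕ)) ∧ |x n k - z| < η).card : ℝ) := by
  have hpi := Real.pi_pos
  set e := min (η / 2) (Real.pi - z) with he
  have he0 : 0 < e := lt_min (by positivity) (by linarith [hz.2])
  have he1 : e ≤ η / 2 := min_le_left _ _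
  have he2 : e ≤ Real.pi - z := min_le_right _ _
  obtain ⟨N1, hN1⟩ := hx_au (η / 2) (by positivity)
  obtain ⟨N2, hN2⟩ := exists_nat_gt (8 * Real.pi / e)
  refine ⟨e / (8 * Real.pi), by positivity, max N1 N2, fun n hn q => ?_⟩
  have hn1 : N1 ≤ n := le_trans (le_max_left _ _) hn
  have hn2 : (N2 : ℝ) ≤ n := by exact_mod_cast le_trans (le_max_right _ _) hn
  have hne : 8 * Real.pi < n * e := by
    rw [div_lt_iff₀ he0] at hN2
    nlinarith
  set M : ℝ := (n : ℝ) + 1 with hM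
  have hM0 : 0 < M := by positivity
  set a := ⌊M * z / Real.pi⌋₊ with ha
  set J := ⌊M * e / (4 * Real.pi)⌋₊ with hJ
  have ha1 : (a : ℝ) ≤ M * z / Real.pi := Nat.floor_le (by have := hz.1; positivity)
  have ha2 : M * z / Real.pi < a + 1 := Nat.lt_floor_add_one _
  have hJ1 : (J : ℝ) ≤ M * e / (4 * Real.pi) := Nat.floor_le (by positivity)
  have hJ2 : M * e / (4 * Real.pi) < J + 1 := Nat.lt_floor_add_one _
  rw [le_div_iff₀ (by positivity)] at ha1 hJ1
  rw [div_lt_iff₀ (by positivity)] at ha2 hJ2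
  -- The indices `a + 2 j + c` with `j < J` have the parity of `q` and lie just to the right of `z`.
  obtain ⟨c, hc1, hcp⟩ : ∃ c : ℕ, c ≤ 1 ∧ ∀ j, (Even q ↔ Even (a + 2 * j + c)) := by
    by_cases hp : Even q ↔ Even a
    · exact ⟨0, by norm_num, fun j => by simp [hp, Nat.even_add]⟩
    · refine ⟨1, le_rfl, fun j => ?_⟩
      simp only [Nat.even_add, even_two, Even.mul_right, iff_true, Nat.not_even_one, iff_false]
      tauto
  have hJcard : J ≤ (Finset.univ.filter fun k : Fin n =>
      (Even q ↔ Even (k : ℕ)) ∧ |x n k - z| < η).card := by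
    refine le_trans ?_ (Finset.card_image_le (f := Fin.val))
    refine Finset.le_card_of_inj_on_range (fun j => a + 2 * j + c) (fun j hj => ?_)
      (fun i _ j _ hij => by omega)
    have hj' : (j : ℝ) + 1 ≤ J := by exact_mod_cast hj
    have hc' : (c : ℝ) ≤ 1 := by exact_mod_cast hc1
    have hc0 : (0 : ℝ) ≤ c := Nat.cast_nonneg c
    have hj0 : (0 : ℝ) ≤ j := Nat.cast_nonneg j
    have hθ1 : z < ((a : ℝ) + 2 * j + c + 1) * Real.pi / M := by
      rw [lt_div_iff₀ hM0]
      nlinarith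
    have hθ2 : ((a : ℝ) + 2 * j + c + 1) * Real.pi / M < z + e := by
      rw [div_lt_iff₀ hM0]
      nlinarith
    have hlt : a + 2 * j + c < n := by
      rw [div_lt_iff₀ hM0] at hθ2
      have : ((a : ℝ) + 2 * j + c + 1) * Real.pi < M * Real.pi := by nlinarith
      have h5 := lt_of_mul_lt_mul_right this hpi.le
      rw [hM] at h5
      have h6 : ((a + 2 * j + c : ℕ) : ℝ) < n := by push_cast; linarith
      exact_mod_cast h6
    rw [Finset.mem_image]
    refine ⟨⟨a + 2 * j + c, hlt⟩, ?_, rfl⟩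
    rw [Finset.mem_filter]
    refine ⟨Finset.mem_univ _, hcp j, ?_⟩
    have h7 := hN1 n hn1 ⟨a + 2 * j + c, hlt⟩
    push_cast at h7
    rw [abs_lt] at h7 ⊢
    constructor <;> linarith [h7.1, h7.2]
  refine le_trans ?_ (Nat.cast_le.mpr hJcard)
  rw [div_mul_eq_mul_div, div_le_iff₀ (by positivity)]
  nlinarith

/-- A positive proportion of the samples of each parity falls in any window of width `ρ` inside
the range of `f`. Uniformity in the window comes from compactness. -/
lemma count_values {f : ℝ → ℝ} (hfe : ∀ x, f (-x) = f x)
    (hf_cae : ∀ᵐ x ∂(volume.restrict (Set.Icc (-Real.pi) Real.pi)),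
      ContinuousWithinAt f (Set.Icc (-Real.pi) Real.pi) x) {A B : ℝ}
    (hER : essRangeR f (Set.Icc (-Real.pi) Real.pi) = Set.Icc A B)
    (x : (n : ℕ) → Fin n → ℝ)
    (hx_au : ∀ ε > (0:ℝ), ∃ N : ℕ, ∀ n ≥ N, ∀ i : Fin n,
      |x n i - ((i : ℕ) + 1) * Real.pi / (n + 1)| < ε) {ρ : ℝ} (hρ : 0 < ρ) :
    ∃ δ > (0 : ℝ), ∃ N : ℕ, ∀ n ≥ N, ∀ c ∈ Set.Icc A (B - ρ), ∀ q : ℕ, δ * n ≤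
      ((Finset.univ.filter fun k : Fin n => (Even q ↔ Even (k : ℕ)) ∧
        c < f (x n k) ∧ f (x n k) < c + ρ).card : ℝ) := by
  refine (isCompact_Icc (a := A) (b := B - ρ)).induction_on
    (p := fun K => ∃ δ > (0 : ℝ), ∃ N : ℕ, ∀ n ≥ N, ∀ c ∈ K, ∀ q : ℕ, δ * n ≤
      ((Finset.univ.filter fun k : Fin n => (Even q ↔ Even (k : ℕ)) ∧
        c < f (x n k) ∧ f (x n k) < c + ρ).card : ℝ)) ?_ ?_ ?_ ?_
  · exact ⟨1, one_pos, 0, fun n _ c hc => absurd hc (Set.notMem_empty c)⟩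
  · rintro s t hst ⟨δ, hδ, N, h⟩
    exact ⟨δ, hδ, N, fun n hn c hc => h n hn c (hst hc)⟩
  · rintro s t ⟨δ, hδ, N, h⟩ ⟨δ', hδ', N', h'⟩
    refine ⟨min δ δ', lt_min hδ hδ', max N N', fun n hn c hc q => ?_⟩
    rcases hc with hc | hc
    · refine le_trans ?_ (h n (le_trans (le_max_left _ _) hn) c hc q)
      gcongr
      exact min_le_left _ _
    · refine le_trans ?_ (h' n (le_trans (le_max_right _ _) hn) c hc q)
      gcongr
      exact min_le_right _ _
  · intro c hc
    obtain ⟨z, hz, hzc, hzy⟩ := exists_continuity_point hfe hf_cae (y := c + ρ / 2)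
      (by rw [hER]; constructor <;> linarith [hc.1, hc.2]) (ε := ρ / 8) (by positivity)
    obtain ⟨η, hη, hzη⟩ := Metric.continuousAt_iff.mp hzc (ρ / 8) (by positivity)
    obtain ⟨δ, hδ, N, h⟩ := count_near x hx_au hz hη
    refine ⟨Metric.ball c (ρ / 8), mem_nhdsWithin_of_mem_nhds (Metric.ball_mem_nhds c (by positivity)),
      δ, hδ, N, fun n hn c' hc' q => (h n hn q).trans ?_⟩
    refine Nat.cast_le.mpr (Finset.card_le_card fun k hk => ?_)
    rw [Finset.mem_filter] at hk ⊢
    refine ⟨hk.1, hk.2.1, ?_⟩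
    have h1 := hzη (x := x n k) (by rw [Real.dist_eq]; exact hk.2.2)
    rw [Real.dist_eq, abs_lt] at h1
    rw [abs_lt] at hzy
    rw [Metric.mem_ball, Real.dist_eq, abs_lt] at hc'
    constructor <;> linarith [h1.1, h1.2, hzy.1, hzy.2, hc'.1, hc'.2]

end samples

/-! ### Eigenvalue bounds -/

section spectrum

lemma eigenvalue_le {f : ℝ → ℝ} (hfe : ∀ x, f (-x) = f x)
    (hf : MemLp f 2 (volume.restrict (Set.Icc (-Real.pi) Real.pi))) {b : ℝ}
    (hb : ∀ x ∈ Set.Icc (-Real.pi) Real.pi, f x ≤ b) {n : ℕ} {V : Matrix (Fin n) (Fin n) ℝ}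
    (hV : V * Vᵀ = 1) {d : Fin n → ℝ}
    (hT : toeplitzR (fun t => (f t : ℂ)) n = V * diagonal d * Vᵀ) (l : Fin n) : d l ≤ b := by
  have hV' : Vᵀ * V = 1 := mul_eq_one_comm.mp hV
  have h := toeplitz_quadratic_le hf hb (fun i => V i l)
  have h1 : ∑ i, V i l ^ 2 = 1 := by
    have := congrFun (congrFun hV' l) l
    simpa [Matrix.mul_apply, sq] using this
  have h2 : Vᵀ * toeplitzR (fun t => (f t : ℂ)) n * V = diagonal d := by
    rw [hT]
    calc Vᵀ * (V * diagonal d * Vᵀ) * V = (Vᵀ * V) * diagonal d * (Vᵀ * V) := by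
          simp only [Matrix.mul_assoc]
      _ = _ := by rw [hV']; simp
  have h3 := congrFun (congrFun h2 l) l
  rw [diagonal_apply_eq, Matrix.mul_apply] at h3
  simp only [Matrix.mul_apply, transpose_apply, toeplitzR_apply hfe hf, Finset.sum_mul] at h3
  rw [h1, mul_one] at h
  rw [← h3, Finset.sum_comm]
  refine le_trans (le_of_eq ?_) h
  exact Finset.sum_congr rfl fun i _ => Finset.sum_congr rfl fun j _ => by ring

lemma le_eigenvalue {f : ℝ → ℝ} (hfe : ∀ x, f (-x) = f x)
    (hf : MemLp f 2 (volume.restrict (Set.Icc (-Real.pi) Real.pi))) {b : ℝ}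
    (hb : ∀ x ∈ Set.Icc (-Real.pi) Real.pi, b ≤ f x) {n : ℕ} {V : Matrix (Fin n) (Fin n) ℝ}
    (hV : V * Vᵀ = 1) {d : Fin n → ℝ}
    (hT : toeplitzR (fun t => (f t : ℂ)) n = V * diagonal d * Vᵀ) (l : Fin n) : b ≤ d l := by
  have hneg : ∀ k, cosCoef (fun x => - f x) k = - cosCoef f k := fun k => by
    simp [cosCoef]
  have hT' : toeplitzR (fun t => ((- f t : ℝ) : ℂ)) n = V * diagonal (-d) * Vᵀ := by
    have hd : diagonal (-d) = -diagonal d := (diagonal_neg d).symm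
    rw [hd, Matrix.mul_neg, Matrix.neg_mul, ← hT]
    ext i j
    rw [toeplitzR_apply (f := fun t => - f t) (fun x => by rw [hfe]) hf.neg, hneg, Matrix.neg_apply,
      toeplitzR_apply hfe hf]
  have := eigenvalue_le (f := fun t => - f t) (fun x => by rw [hfe]) hf.neg (b := -b)
    (fun x hx => by linarith [hb x hx]) hV hT' l
  simp only [Pi.neg_apply] at this
  linarith

end spectrum

/-! ### Simultaneous diagonalization -/

section assembly

lemma toeplitzR_symm {f : ℝ → ℝ} (hfe : ∀ x, f (-x) = f x)
    (hf : MemLp f 2 (volume.restrict (Set.Icc (-Real.pi) Real.pi))) (n : ℕ) :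
    (toeplitzR (fun t => (f t : ℂ)) n)ᵀ = toeplitzR (fun t => (f t : ℂ)) n := by
  ext i j
  rw [transpose_apply, toeplitzR_apply hfe hf, toeplitzR_apply hfe hf, ← cosCoef_neg]
  congr 1
  ring

lemma flipM_comm_toeplitzR {f : ℝ → ℝ} (hfe : ∀ x, f (-x) = f x)
    (hf : MemLp f 2 (volume.restrict (Set.Icc (-Real.pi) Real.pi))) (n : ℕ) :
    flipM n * toeplitzR (fun t => (f t : ℂ)) n = toeplitzR (fun t => (f t : ℂ)) n * flipM n := by
  ext i j
  rw [flipM_mul_apply, mul_flipM_apply, toeplitzR_apply hfe hf, toeplitzR_apply hfe hf,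
    ← cosCoef_neg]
  congr 1
  have h1 := Fin.val_rev i
  have h2 := Fin.val_rev j
  omega

lemma neg_one_pow_eq_iff {i j : ℕ} : (-1 : ℝ) ^ i = (-1) ^ j ↔ (Even i ↔ Even j) := by
  rcases Nat.even_or_odd i with hi | hi <;> rcases Nat.even_or_odd j with hj | hj <;>
    simp [hi.neg_one_pow, hj.neg_one_pow, hi, hj, Nat.not_even_iff_odd.mpr] <;> norm_num

/-- A matrix commutes with the alternating sign matrix exactly when it is block diagonal with
respect to the parity of the indices. -/
lemma altM_comm_iff {n : ℕ} (A : Matrix (Fin n) (Fin n) ℝ) :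
    altM n * A = A * altM n ↔ ∀ i j : Fin n, ¬(Even (i : ℕ) ↔ Even (j : ℕ)) → A i j = 0 := by
  have key : ∀ i j : Fin n, (altM n * A) i j = (A * altM n) i j ↔
      (-1 : ℝ) ^ (i : ℕ) = (-1) ^ (j : ℕ) ∨ A i j = 0 := by
    intro i j
    rw [altM, diagonal_mul, mul_diagonal, mul_comm (A i j), mul_eq_mul_right_iff]
  constructor
  · intro h i j hij
    rcases (key i j).mp (by rw [h]) with h1 | h1
    · exact absurd (neg_one_pow_eq_iff.mp h1) hij
    · exact h1
  · intro h
    ext i j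
    refine (key i j).mpr ?_
    by_cases hij : Even (i : ℕ) ↔ Even (j : ℕ)
    · exact Or.inl (neg_one_pow_eq_iff.mpr hij)
    · exact Or.inr (h i j hij)

/-- The algebraic part of the theorem for a single `n`. Besides the simultaneous
diagonalization, it records that `V = sineM n * W` with `W` block diagonal by parity, and that
the eigenvalues are ordered like the samples `s` within each parity class. -/
lemma exists_diagonalization {f : ℝ → ℝ} (hfe : ∀ x, f (-x) = f x)
    (hf : MemLp f 2 (volume.restrict (Set.Icc (-Real.pi) Real.pi))) (n : ℕ) (s : Fin n → ℝ) :
    ∃ (W : Matrix (Fin n) (Fin n) ℝ) (d : Fin n → ℝ), W * Wᵀ = 1 ∧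
      (sineM n * W) * (sineM n * W)ᵀ = 1 ∧
      flipM n = (sineM n * W) * altM n * (sineM n * W)ᵀ ∧
      toeplitzR (fun t => (f t : ℂ)) n = (sineM n * W) * diagonal d * (sineM n * W)ᵀ ∧
      (∀ i j : Fin n, ¬(Even (i : ℕ) ↔ Even (j : ℕ)) → W i j = 0) ∧
      (∀ i j : Fin n, (Even (i : ℕ) ↔ Even (j : ℕ)) → s i < s j → d i ≤ d j) := by
  set T := toeplitzR (fun t => (f t : ℂ)) n with hT
  set S := sineM n with hS
  have hSS : S * Sᵀ = 1 := sineM_mul_transpose n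
  have hSS' : Sᵀ * S = 1 := mul_eq_one_comm.mp hSS
  have hflip : flipM n * S = S * altM n := flipM_mul_sineM n
  have hflip' : Sᵀ * flipM n = altM n * Sᵀ := by
    calc Sᵀ * flipM n = Sᵀ * flipM n * (S * Sᵀ) := by rw [hSS, Matrix.mul_one]
      _ = Sᵀ * (flipM n * S) * Sᵀ := by simp only [Matrix.mul_assoc]
      _ = (Sᵀ * S) * altM n * Sᵀ := by rw [hflip]; simp only [Matrix.mul_assoc]
      _ = altM n * Sᵀ := by rw [hSS', Matrix.one_mul]
  have hcomm : flipM n * T = T * flipM n := flipM_comm_toeplitzR hfe hf n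
  have hTt : Tᵀ = T := toeplitzR_symm hfe hf n
  have hM : (Sᵀ * T * S)ᵀ = Sᵀ * T * S := by
    rw [transpose_mul, transpose_mul, transpose_transpose, hTt, Matrix.mul_assoc]
  have hMc : altM n * (Sᵀ * T * S) = (Sᵀ * T * S) * altM n := by
    calc altM n * (Sᵀ * T * S) = (altM n * Sᵀ) * T * S := by simp only [Matrix.mul_assoc]
      _ = Sᵀ * (flipM n * T) * S := by rw [← hflip']; simp only [Matrix.mul_assoc]
      _ = Sᵀ * T * (flipM n * S) := by rw [hcomm]; simp only [Matrix.mul_assoc]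
      _ = _ := by rw [hflip]; simp only [Matrix.mul_assoc]
  obtain ⟨W, d, hW, hMW, hWp, hmono⟩ := exists_block_diag (fun i : Fin n => Even (i : ℕ))
    (Sᵀ * T * S) hM ((altM_comm_iff _).mp hMc) s
  have hWc : altM n * W = W * altM n := (altM_comm_iff _).mpr hWp
  refine ⟨W, d, hW, ?_, ?_, ?_, hWp, hmono⟩
  · rw [transpose_mul]
    calc S * W * (Wᵀ * Sᵀ) = S * (W * Wᵀ) * Sᵀ := by simp only [Matrix.mul_assoc]
      _ = 1 := by rw [hW, Matrix.mul_one, hSS]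
  · rw [transpose_mul]
    calc flipM n = flipM n * S * Sᵀ := by rw [Matrix.mul_assoc, hSS, Matrix.mul_one]
      _ = S * altM n * (W * Wᵀ) * Sᵀ := by rw [hflip, hW, Matrix.mul_one]
      _ = S * (altM n * W) * (Wᵀ * Sᵀ) := by simp only [Matrix.mul_assoc]
      _ = _ := by rw [hWc]; simp only [Matrix.mul_assoc]
  · rw [transpose_mul]
    calc T = (S * Sᵀ) * T * (S * Sᵀ) := by rw [hSS, Matrix.one_mul, Matrix.mul_one]
      _ = S * (Sᵀ * T * S) * Sᵀ := by simp only [Matrix.mul_assoc]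
      _ = _ := by rw [hMW]; simp only [Matrix.mul_assoc]

end assembly

/-- Let `f : [-π,π] → ℝ` be even, bounded, continuous a.e., with
essential range equal to `[inf_{[0,π]} f, sup_{[0,π]} f]`.  Then for every asymptotically
uniform grid `{x_{i,n}}` in `[0,π]` and every `n` there are a real unitary `V_n` and
orderings of the eigenvalues of `T_n(f)` and `H_n(f)` realizing the simultaneous
diagonalizations, the alternating sign relation, and
`max_i |f(x_{i,n}) - λ_i(T_n(f))| → 0`. -/
theorem stmt1
    (f : ℝ → ℝ)
    (hf_even : ∀ x, f (-x) = f x)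
    (hf_bdd : ∃ C : ℝ, ∀ x ∈ Set.Icc (-Real.pi) Real.pi, |f x| ≤ C)
    (hf_cae : ∀ᵐ x ∂(volume.restrict (Set.Icc (-Real.pi) Real.pi)),
      ContinuousWithinAt f (Set.Icc (-Real.pi) Real.pi) x)
    (hER : essRangeR f (Set.Icc (-Real.pi) Real.pi)
      = Set.Icc (sInf (f '' Set.Icc 0 Real.pi)) (sSup (f '' Set.Icc 0 Real.pi)))
    (x : (n : ℕ) → Fin n → ℝ)
    (hx_mem : ∀ n, ∀ i : Fin n, x n i ∈ Set.Icc 0 Real.pi)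
    (hx_au : ∀ ε > (0:ℝ), ∃ N : ℕ, ∀ n ≥ N, ∀ i : Fin n,
      |x n i - ((i : ℕ) + 1) * Real.pi / (n + 1)| < ε) :
    ∃ (V : (n : ℕ) → Matrix (Fin n) (Fin n) ℝ) (lamT lamH : (n : ℕ) → Fin n → ℝ),
      (∀ n : ℕ,
        V n * (V n)ᵀ = 1 ∧
        flipM n = V n * Matrix.diagonal (fun i : Fin n => ((-1 : ℝ)) ^ (i : ℕ)) * (V n)ᵀ ∧
        toeplitzR (fun t => (f t : ℂ)) n = V n * Matrix.diagonal (lamT n) * (V n)ᵀ ∧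
        flipM n * toeplitzR (fun t => (f t : ℂ)) n
          = V n * (Matrix.diagonal (fun i : Fin n => ((-1 : ℝ)) ^ (i : ℕ))
              * Matrix.diagonal (lamT n)) * (V n)ᵀ ∧
        (∀ i : Fin n, lamH n i = (-1 : ℝ) ^ (i : ℕ) * lamT n i)) ∧
      (∀ ε > (0:ℝ), ∃ N : ℕ, ∀ n ≥ N, ∀ i : Fin n, |f (x n i) - lamT n i| < ε) := by
  obtain ⟨C, hC⟩ := hf_bdd
  have hf2 : MemLp f 2 (volume.restrict (Set.Icc (-Real.pi) Real.pi)) :=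
    memLp_two (aestronglyMeasurable_of_ae_continuous hf_cae) hC
  choose W d hW hV hY hT hWp hmono using fun n =>
    exists_diagonalization hf_even hf2 n (fun i => f (x n i))
  refine ⟨fun n => sineM n * W n, d, fun n i => (-1) ^ (i : ℕ) * d n i,
    fun n => ⟨hV n, hY n, hT n, ?_, fun i => rfl⟩, ?_⟩
  · have hV' : (sineM n * W n)ᵀ * (sineM n * W n) = 1 := mul_eq_one_comm.mp (hV n)
    calc flipM n * toeplitzR (fun t => (f t : ℂ)) n
        = (sineM n * W n * altM n * (sineM n * W n)ᵀ)
          * (sineM n * W n * diagonal (d n) * (sineM n * W n)ᵀ) := by rw [← hY n, ← hT n]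
      _ = sineM n * W n * (altM n * ((sineM n * W n)ᵀ * (sineM n * W n)) * diagonal (d n))
          * (sineM n * W n)ᵀ := by simp only [Matrix.mul_assoc]
      _ = _ := by rw [hV', Matrix.mul_one]; rfl
  -- Convergence: an error of size `ε` at one index costs `(ε / 3) ^ 2 * δ * n` in squared Frobenius
  -- norm, which is more than the available `(ε / 3) ^ 2 * δ / 2 * n`.
  intro ε hε
  set A := sInf (f '' Set.Icc 0 Real.pi) with hA
  set B := sSup (f '' Set.Icc 0 Real.pi) with hB
  have hmem : ∀ t ∈ Set.Icc 0 Real.pi, t ∈ Set.Icc (-Real.pi) Real.pi := fun t ht =>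
    ⟨by linarith [ht.1, Real.pi_pos], ht.2⟩
  have hbelow : BddBelow (f '' Set.Icc 0 Real.pi) := by
    refine ⟨-C, ?_⟩
    rintro _ ⟨t, ht, rfl⟩
    exact (abs_le.mp (hC t (hmem t ht))).1
  have habove : BddAbove (f '' Set.Icc 0 Real.pi) := by
    refine ⟨C, ?_⟩
    rintro _ ⟨t, ht, rfl⟩
    exact (abs_le.mp (hC t (hmem t ht))).2
  have hrange : ∀ t ∈ Set.Icc (-Real.pi) Real.pi, A ≤ f t ∧ f t ≤ B := by
    intro t ht
    have habs : |t| ∈ Set.Icc 0 Real.pi := ⟨abs_nonneg t, abs_le.mpr ht⟩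
    have hft : f |t| = f t := by
      rcases abs_choice t with h | h <;> rw [h]
      exact hf_even t
    rw [← hft]
    exact ⟨csInf_le hbelow ⟨_, habs, rfl⟩, le_csSup habove ⟨_, habs, rfl⟩⟩
  obtain ⟨δ, hδ, N₁, hN₁⟩ := count_values hf_even hf_cae hER x hx_au
    (ρ := 2 * ε / 3) (by positivity)
  obtain ⟨N₂, hN₂⟩ := frobSq_toeplitzR_sub_sine hf_even ⟨C, hC⟩ hf_cae x hx_mem hx_au
    (ε := (ε / 3) ^ 2 * δ / 2) (by positivity)
  refine ⟨max N₁ N₂, fun n hn i => ?_⟩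
  have hn₁ := hN₁ n (le_of_max_le_left hn)
  have hn₂ := hN₂ n (le_of_max_le_right hn)
  have hn0 : (0 : ℝ) < n := by
    have := i.pos
    exact_mod_cast this
  have hfrob : frobSq (W n * diagonal (d n) * (W n)ᵀ - diagonal (fun i => f (x n i)))
      ≤ (ε / 3) ^ 2 * δ / 2 * n := by
    refine le_trans (le_of_eq ?_) hn₂
    have e : toeplitzR (fun t => (f t : ℂ)) n
          - sineM n * diagonal (fun i => f (x n i)) * (sineM n)ᵀ
        = sineM n * (W n * diagonal (d n) * (W n)ᵀ - diagonal (fun i => f (x n i)))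
          * (sineM n)ᵀ := by
      rw [hT n, transpose_mul, Matrix.mul_sub, Matrix.sub_mul]
      simp only [Matrix.mul_assoc]
    rw [e, frobSq_mul_right, frobSq_mul_left _ _ (sineM_mul_transpose n)]
    rw [transpose_transpose]
    exact mul_eq_one_comm.mp (sineM_mul_transpose n)
  have hs := hrange _ (hmem _ (hx_mem n i))
  have hdB := eigenvalue_le hf_even hf2 (fun t ht => (hrange t ht).2) (hV n) (hT n) i
  have hdA := le_eigenvalue hf_even hf2 (fun t ht => (hrange t ht).1) (hV n) (hT n) i
  have hcontra : ∀ c : ℝ, δ * n ≤ c → (ε / 3) ^ 2 * c ≤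
      frobSq (W n * diagonal (d n) * (W n)ᵀ - diagonal (fun i => f (x n i))) → False := by
    intro c h1 h2
    have h3 : (ε / 3) ^ 2 * (δ * n) ≤ (ε / 3) ^ 2 * δ / 2 * n :=
      (mul_le_mul_of_nonneg_left h1 (by positivity)).trans (h2.trans hfrob)
    have h4 : 0 < (ε / 3) ^ 2 * δ * n := by positivity
    linarith
  by_contra hcon
  rw [not_lt, le_abs] at hcon
  rcases hcon with h | h
  · have h1 := hn₁ (f (x n i) - 2 * ε / 3) ⟨by linarith, by linarith [hs.2]⟩ i
    have h2 := transport_card_le' (hW n) (d n) (fun i => f (x n i))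
      (fun i : Fin n => Even (i : ℕ)) (hWp n) hε
      (fun j hp hj => hmono n j i hp.symm hj) (i := i) (by linarith)
    simp only [sub_add_cancel] at h1
    exact hcontra _ h1 h2
  · have h1 := hn₁ (f (x n i)) ⟨hs.1, by linarith⟩ i
    have h2 := transport_card_le (hW n) (d n) (fun i => f (x n i))
      (fun i : Fin n => Even (i : ℕ)) (hWp n) hε
      (fun j hp hj => hmono n i j hp hj) (i := i) (by linarith)
    exact hcontra _ h1 h2
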